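/- Fix n ≥ 1 and k ≥ 1. Then in ℤ[q] one has Σ_T q^{mspin(sh(T)) + s(T)} = Σ_{μ ⊢ k} s_μ(1, q², q⁴, …, q^{2(n−1)}) · f^μ, where the left sum is over all standard n-ribbon tableaux T with k ribbons whose shape λ = sh(T) has empty n-core and at most n rows, mspin(λ) denotes the maximum spin of a tiling of λ by n-ribbons, s_μ(1,q²,…,q^{2(n−1)}) is the Schur polynomial in n variables evaluated at 1, q², …, q^{2(n−1)}, and f^μ is the number of standard Young tableaux of shape μ. -/

import Mathlib

/-!
Both sides equal `(1 + q² + ⋯ + q^{2(n-1)})^k`.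

For the right-hand side, `Σ_μ f^μ s_μ(v) = (v_0 + ⋯ + v_{n-1})^k` (`sum_std_mul_schurVal`) follows
by induction on `k` from the Pieri rule for one box, `schurVal_pieri`. The Pieri rule is proved by
induction on the number of variables, peeling off the last horizontal strip of a tableau, from the
commutation relation between removing a box and adding a horizontal strip (`box_strip_commute`).

For the left-hand side, a partition `λ` with at most `n` rows is encoded by its `n` beta numbers
(`beads`). If its `n`-core is empty, the beads occupy each residue class modulo `n` exactly once
(`BalancedBeads`). Adding an `n`-ribbon that occupies the rows `t, …, b` moves the `b`-th bead `n`
places up, where it becomes the `t`-th bead (`StepData`). An explicit statistic `beadStat` on bead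
sets grows by exactly `b + t` under such a move (`StepData.beadStat_eq`), while the spin of the
ribbon is `b - t`. Every ribbon tiling of `λ` has a ribbon whose removal leaves a partition
(`IsTilingOf.exists_removable`), so the spin of a tiling is at most `beadStat`; and a ribbon starting
in the top row can always be removed (`BalancedBeads.exists_remove`), so the bound is attained. Hence
the maximal spin is `beadStat` (`BalancedBeads.maxSpin_eq`), and `mspin + spin` grows by
`(b + t) + (b - t) = 2b` with each added ribbon. Since each `b < n` is the bottom row of exactly one
ribbon addable to `λ` (`BalancedBeads.exists_add`, `StepData.unique`), each step multiplies the
generating function by `Σ_{b < n} q^{2b}` (`sum_add_ribbon`).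
-/


open scoped Classical

noncomputable section

/-- A cell of a Young/skew diagram: (row, column). -/
abbrev Cell : Type := ℕ × ℕ

/-- Two cells are adjacent if they share an edge. -/
def Adj (a b : Cell) : Prop :=
  (a.1 = b.1 ∧ (a.2 + 1 = b.2 ∨ b.2 + 1 = a.2)) ∨
  (a.2 = b.2 ∧ (a.1 + 1 = b.1 ∨ b.1 + 1 = a.1))

/-- Reachability inside a finite set of cells via edge-adjacency. -/
def Reach (S : Finset Cell) (a b : Cell) : Prop :=
  Relation.ReflTransGen (fun x y => y ∈ S ∧ Adj x y) a b

/-- A set of cells is connected if any two of its cells are joined by a path inside it. -/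
def CellsConnected (S : Finset Cell) : Prop :=
  ∀ a ∈ S, ∀ b ∈ S, Reach S a b

/-- The connected component of the cell `c` inside `S`. -/
def component (S : Finset Cell) (c : Cell) : Finset Cell :=
  S.filter (fun d => Reach S c d)

/-- The number of connected components of a set of cells. -/
def numComponents (S : Finset Cell) : ℕ :=
  (S.image (fun c => component S c)).card

/-- `S` contains no 2 × 2 square of cells. -/
def NoSquare (S : Finset Cell) : Prop :=
  ¬ ∃ i j : ℕ, (i, j) ∈ S ∧ (i + 1, j) ∈ S ∧ (i, j + 1) ∈ S ∧ (i + 1, j + 1) ∈ S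

/-- `S` is (the set of cells of) a skew shape `λ/μ`. -/
def IsSkewCells (S : Finset Cell) : Prop :=
  ∃ lam mu : YoungDiagram, mu ≤ lam ∧ S = lam.cells \ mu.cells

/-- An `n`-ribbon: a connected skew shape with `n` cells and no 2 × 2 square. -/
def IsRibbon (n : ℕ) (S : Finset Cell) : Prop :=
  S.card = n ∧ CellsConnected S ∧ NoSquare S ∧ IsSkewCells S

/-- The spin of a ribbon: the number of rows it occupies, minus 1. -/
def ribbonSpin (S : Finset Cell) : ℕ := (S.image Prod.fst).card - 1

/-- `T` is a tiling of the cell set `S` by `n`-ribbons. -/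
def IsTilingOf (n : ℕ) (S : Finset Cell) (T : Finset (Finset Cell)) : Prop :=
  (∀ R ∈ T, IsRibbon n R) ∧
  ((T : Set (Finset Cell)).Pairwise fun A B => Disjoint A B) ∧
  T.biUnion id = S

/-- `S` can be tiled by `n`-ribbons. -/
def Tileable (n : ℕ) (S : Finset Cell) : Prop := ∃ T, IsTilingOf n S T

/-- Total spin of a tiling. -/
def tilingSpin (T : Finset (Finset Cell)) : ℕ := ∑ R ∈ T, ribbonSpin R

/-- The maximum spin of an `n`-ribbon tiling of `S`. -/
def maxSpin (n : ℕ) (S : Finset Cell) : ℕ :=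
  sSup {m : ℕ | ∃ T, IsTilingOf n S T ∧ tilingSpin T = m}

/-- `c` is the topright-most cell of `R`: maximal column and, among those, minimal row. -/
def TopRightCell (R : Finset Cell) (c : Cell) : Prop :=
  c ∈ R ∧ ∀ d ∈ R, d.2 ≤ c.2 ∧ (d.2 = c.2 → c.1 ≤ d.1)

/-- Every ribbon of the tiling `T` has its topright-most cell touching the northern
edge of the shape `S`: the cell directly above it is not in `S`. -/
def NorthernCond (S : Finset Cell) (T : Finset (Finset Cell)) : Prop :=
  ∀ R ∈ T, ∀ c : Cell, TopRightCell R c → (c.1 = 0 ∨ (c.1 - 1, c.2) ∉ S)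

/-- `T` is a tiling of `S` witnessing that `S` is a horizontal `n`-ribbon strip. -/
def IsHStripTiling (n : ℕ) (S : Finset Cell) (T : Finset (Finset Cell)) : Prop :=
  IsTilingOf n S T ∧ NorthernCond S T

/-- `S` is a horizontal `n`-ribbon strip. -/
def IsHStripCells (n : ℕ) (S : Finset Cell) : Prop :=
  IsSkewCells S ∧ ∃ T, IsHStripTiling n S T

/-- The spin of a horizontal `n`-ribbon strip (via its tiling, which is unique when it exists). -/
def stripSpin (n : ℕ) (S : Finset Cell) : ℕ :=
  if h : ∃ T, IsHStripTiling n S T then tilingSpin h.choose else 0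

/-- Conjugate (transpose) of a set of cells. -/
def swapCells (S : Finset Cell) : Finset Cell := S.image Prod.swap

/-- `S` is a vertical `n`-ribbon strip: its conjugate is a horizontal one. -/
def IsVStripCells (n : ℕ) (S : Finset Cell) : Prop :=
  IsHStripCells n (swapCells S)

/-- The spin of a vertical `n`-ribbon strip with `k = |S|/n` ribbons:
`k (n-1)` minus the spin of the conjugate strip. -/
def vStripSpin (n : ℕ) (S : Finset Cell) : ℕ :=
  (S.card / n) * (n - 1) - stripSpin n (swapCells S)

/-- `T` is a tiling of `S` witnessing that `S` is a vertical `n`-ribbon strip. -/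
def IsVStripTiling (n : ℕ) (S : Finset Cell) (T : Finset (Finset Cell)) : Prop :=
  IsHStripTiling n (swapCells S) (T.image swapCells)

/-- `mu` is obtained from `lam` by removing a single `n`-ribbon. -/
def RibbonStep (n : ℕ) (lam mu : YoungDiagram) : Prop :=
  mu ≤ lam ∧ IsRibbon n (lam.cells \ mu.cells)

/-- `delta` is the `n`-core of `lam`: it is obtained from `lam` by successively removing
`n`-ribbons, and no further `n`-ribbon can be removed from it. -/
def IsNCoreOf (n : ℕ) (delta lam : YoungDiagram) : Prop :=
  Relation.ReflTransGen (RibbonStep n) lam delta ∧ ∀ mu, ¬ RibbonStep n delta mu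

/-- The `n`-core of a partition (defined via choice; it exists and is unique). -/
def nCore (n : ℕ) (lam : YoungDiagram) : YoungDiagram :=
  if h : ∃ d, IsNCoreOf n d lam then h.choose else lam

/-- A semistandard `n`-ribbon tableau of shape `lam/mu` with entries in `{1, …, N}`:
a chain of partitions `mu = μ⁰ ⊆ μ¹ ⊆ ⋯ ⊆ μᴺ = lam` where each `μⁱ/μ^{i-1}` is a (possibly
empty) horizontal `n`-ribbon strip, together with the (unique) tiling of each strip. -/
structure RibbonTableau (n N : ℕ) (lam mu : YoungDiagram) where
  chain : Fin (N + 1) → YoungDiagram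
  chain_zero : chain 0 = mu
  chain_last : chain (Fin.last N) = lam
  chain_mono : ∀ i : Fin N, chain i.castSucc ≤ chain i.succ
  tiling : Fin N → Finset (Finset Cell)
  tiling_strip : ∀ i : Fin N,
    IsHStripTiling n ((chain i.succ).cells \ (chain i.castSucc).cells) (tiling i)

/-- The spin of a ribbon tableau. -/
def RibbonTableau.spin {n N : ℕ} {lam mu : YoungDiagram} (T : RibbonTableau n N lam mu) : ℕ :=
  ∑ i : Fin N, tilingSpin (T.tiling i)

/-- A standard ribbon tableau: each letter occurs exactly once. -/
def RibbonTableau.IsStandard {n N : ℕ} {lam mu : YoungDiagram}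
    (T : RibbonTableau n N lam mu) : Prop :=
  ∀ i : Fin N, (T.tiling i).card = 1

/-- The monomial `q^{spin T} x^{weight T}` attached to a ribbon tableau. -/
def tableauTerm {n N : ℕ} {lam mu : YoungDiagram} (T : RibbonTableau n N lam mu) :
    MvPolynomial (Fin N) (Polynomial ℤ) :=
  MvPolynomial.C (Polynomial.X ^ T.spin) *
    ∏ i : Fin N, MvPolynomial.X i ^ (T.tiling i).card

/-- The ribbon function `𝒢_{lam/mu}(x₁, …, x_N; q)`. -/
def ribbonFn (n N : ℕ) (lam mu : YoungDiagram) : MvPolynomial (Fin N) (Polynomial ℤ) :=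
  ∑ᶠ T : RibbonTableau n N lam mu, tableauTerm T

/-- `𝒢_lam = 𝒢_{lam/(n-core of lam)}`. -/
def G (n N : ℕ) (lam : YoungDiagram) : MvPolynomial (Fin N) (Polynomial ℤ) :=
  ribbonFn n N lam (nCore n lam)

/-- The Schur polynomial `s_ν(x₁,…,x_N)`, realized as the `n = 1` ribbon function
(1-ribbon tableaux are exactly semistandard Young tableaux, and all spins are 0). -/
def schurPoly (N : ℕ) (nu : YoungDiagram) : MvPolynomial (Fin N) (Polynomial ℤ) :=
  ribbonFn 1 N nu ⊥

/-- The cells of the `i`-th horizontal strip of a decomposition. -/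
def stripCells {len : ℕ} (strip : Fin len → Finset (Finset Cell)) (i : Fin len) : Finset Cell :=
  (strip i).biUnion id

/-- The cells of `lam` together with the strips up to (and including) `i`. -/
def partialCells {len : ℕ} (strip : Fin len → Finset (Finset Cell)) (lam : YoungDiagram)
    (i : Fin len) : Finset Cell :=
  lam.cells ∪ (Finset.univ.filter (fun j => j ≤ i)).biUnion (fun j => stripCells strip j)

/-- The union of the cells of the strips strictly before `i`. -/
def prevCells {len : ℕ} (strip : Fin len → Finset (Finset Cell)) (i : Fin len) : Finset Cell :=
  (Finset.univ.filter (fun j => j < i)).biUnion (fun j => stripCells strip j)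

/-- Two cell sets touch if some cell of one is adjacent to some cell of the other. -/
def Touches (A B : Finset Cell) : Prop :=
  ∃ a ∈ A, ∃ b ∈ B, Adj a b

/-- `R` is the rightmost ribbon within the cell set `C`. -/
def IsRightmostIn (R C : Finset Cell) : Prop :=
  ∃ c ∈ R, ∀ d ∈ C, d.2 ≤ c.2

/-- A border `n`-ribbon strip of shape `mu/lam`: the connected skew shape `mu/lam` with a
distinguished decomposition into disjoint non-empty horizontal `n`-ribbon strips
`T₁, …, T_len` (each recorded by its tiling) such that each partial union is a skew shape,
`T₁` is connected, and for `i ≥ 2` every connected component `C` of `Tᵢ` is such that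
`C ∪ (T₁ ∪ ⋯ ∪ T_{i-1})` is not a horizontal `n`-ribbon strip and only the rightmost
ribbon of `C` touches `T₁ ∪ ⋯ ∪ T_{i-1}`. -/
structure BorderRibbonStrip (n : ℕ) (lam mu : YoungDiagram) where
  len : ℕ
  len_pos : 1 ≤ len
  strip : Fin len → Finset (Finset Cell)
  sub : lam ≤ mu
  connected : CellsConnected (mu.cells \ lam.cells)
  nonempty : ∀ i, (strip i).Nonempty
  disj : ∀ i j, i ≠ j → Disjoint (stripCells strip i) (stripCells strip j)
  cover : Finset.univ.biUnion (fun i => stripCells strip i) = mu.cells \ lam.cells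
  shape : ∀ i, ∃ nu : YoungDiagram, nu.cells = partialCells strip lam i
  hstrips : ∀ i, IsHStripTiling n (stripCells strip i) (strip i)
  first_connected : CellsConnected (stripCells strip ⟨0, len_pos⟩)
  comp_cond : ∀ i : Fin len, 0 < (i : ℕ) → ∀ c ∈ stripCells strip i,
    (¬ IsHStripCells n (component (stripCells strip i) c ∪ prevCells strip i)) ∧
    (∀ R ∈ strip i, R ⊆ component (stripCells strip i) c →
      Touches R (prevCells strip i) → IsRightmostIn R (component (stripCells strip i) c))

/-- The height of a border ribbon strip: total number of connected components of its
horizontal strips, minus 1. -/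
def BorderRibbonStrip.height {n : ℕ} {lam mu : YoungDiagram}
    (S : BorderRibbonStrip n lam mu) : ℕ :=
  (∑ i : Fin S.len, numComponents (stripCells S.strip i)) - 1

/-- The spin of a border ribbon strip. -/
def BorderRibbonStrip.spin {n : ℕ} {lam mu : YoungDiagram}
    (S : BorderRibbonStrip n lam mu) : ℕ :=
  ∑ i : Fin S.len, tilingSpin (S.strip i)

/-- The size (number of ribbons) of a border ribbon strip. -/
def BorderRibbonStrip.size {n : ℕ} {lam mu : YoungDiagram}
    (S : BorderRibbonStrip n lam mu) : ℕ :=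
  ∑ i : Fin S.len, (S.strip i).card

/-- `𝒳^{mu/lam}_k(q) = Σ_S (-1)^{h(S)} q^{s(S)}` over border `n`-ribbon strips of shape
`mu/lam` with `k` ribbons. -/
def chiX (n k : ℕ) (lam mu : YoungDiagram) : Polynomial ℤ :=
  ∑ᶠ S : BorderRibbonStrip n lam mu,
    if S.size = k then (-1) ^ S.height * Polynomial.X ^ S.spin else 0

/-- The complete homogeneous symmetric polynomial of degree `k` evaluated at the family `v`. -/
def hPoly {ι R : Type*} [Fintype ι] [DecidableEq ι] [CommSemiring R] (k : ℕ) (v : ι → R) : R :=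
  ∑ d : Sym ι k, ((d : Multiset ι).map v).prod

/-- The elementary symmetric polynomial of degree `k` evaluated at the family `v`. -/
def ePoly {ι R : Type*} [Fintype ι] [DecidableEq ι] [CommSemiring R] (k : ℕ) (v : ι → R) : R :=
  ∑ s ∈ Finset.univ.powersetCard k, ∏ i ∈ s, v i

/-- The alphabet `A_q(x) = {q^{2j} x_i : 1 ≤ i ≤ N, 0 ≤ j ≤ n-1}`. -/
def alphabetVal (n N : ℕ) : Fin N × Fin n → MvPolynomial (Fin N) (Polynomial ℤ) :=
  fun p => MvPolynomial.C (Polynomial.X ^ (2 * (p.2 : ℕ))) * MvPolynomial.X p.1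

/-- The Schur function `s_lam` evaluated at the alphabet `A_q(x)`,
i.e. the plethysm `s_lam[(1+q²+⋯+q^{2n-2})X]` in `N` variables. -/
def schurAlph (n N : ℕ) (lam : YoungDiagram) : MvPolynomial (Fin N) (Polynomial ℤ) :=
  MvPolynomial.aeval
    (fun t : Fin (n * N) => alphabetVal n N (Prod.swap (finProdFinEquiv.symm t)))
    (schurPoly (n * N) lam)

end

noncomputable section

/-! ### Finiteness -/

theorem finite_card_le (m : ℕ) : {lam : YoungDiagram | lam.card ≤ m}.Finite := by
  have hinj : Function.Injective (fun lam : YoungDiagram => lam.cells) := by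
    intro a b h
    exact YoungDiagram.ext h
  refine Set.Finite.subset (Set.Finite.preimage hinj.injOn
    (Finset.finite_toSet ((Finset.range m ×ˢ Finset.range m).powerset))) ?_
  intro lam hlam
  replace hlam : lam.card ≤ m := hlam
  simp only [Set.mem_preimage, Finset.mem_coe, Finset.mem_powerset]
  rintro ⟨i, j⟩ hij
  have hsub : Finset.range (i + 1) ×ˢ Finset.range (j + 1) ⊆ lam.cells := by
    rintro ⟨a, b⟩ hab
    simp only [Finset.mem_product, Finset.mem_range] at hab
    exact lam.up_left_mem (by omega) (by omega) hij
  have hc := Finset.card_le_card hsub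
  simp only [Finset.card_product, Finset.card_range] at hc
  have : (i + 1) * (j + 1) ≤ m := hc.trans hlam
  simp only [Finset.mem_product, Finset.mem_range]
  constructor <;> nlinarith

/-- The Young diagrams with at most `m` cells, as a finite set. -/
def smallDiagrams (m : ℕ) : Finset YoungDiagram := (finite_card_le m).toFinset

theorem mem_smallDiagrams {m : ℕ} {lam : YoungDiagram} :
    lam ∈ smallDiagrams m ↔ lam.card ≤ m := by
  simp [smallDiagrams]

theorem card_le_of_le {nu lam : YoungDiagram} (h : nu ≤ lam) : nu.card ≤ lam.card :=
  Finset.card_le_card (YoungDiagram.cells_subset_iff.2 h)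

theorem card_sdiff_add {nu lam : YoungDiagram} (h : nu ≤ lam) :
    (lam.cells \ nu.cells).card + nu.card = lam.card :=
  Finset.card_sdiff_add_card_eq_card (YoungDiagram.cells_subset_iff.2 h)

theorem finite_tilings (n : ℕ) (S : Finset Cell) : {D | IsHStripTiling n S D}.Finite := by
  refine (Finset.finite_toSet S.powerset.powerset).subset ?_
  intro D hD
  simp only [Finset.mem_coe, Finset.mem_powerset]
  intro R hR
  rw [Finset.mem_powerset, ← hD.1.2.2]
  exact Finset.subset_biUnion_of_mem id hR

/-! ### Decomposition of tableaux by their last strip -/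

theorem ribbonTableau_ext {n N : ℕ} {lam mu : YoungDiagram} {S T : RibbonTableau n N lam mu}
    (h1 : S.chain = T.chain) (h2 : S.tiling = T.tiling) : S = T := by
  cases S; cases T; simp_all

/-- Append one more horizontal strip to a tableau of shape `nu/mu`. -/
def snocTableau {n N : ℕ} {nu mu : YoungDiagram} (T : RibbonTableau n N nu mu)
    (lam : YoungDiagram) (h : nu ≤ lam) (D : Finset (Finset Cell))
    (hD : IsHStripTiling n (lam.cells \ nu.cells) D) : RibbonTableau n (N + 1) lam mu where
  chain := Fin.snoc (α := fun _ => YoungDiagram) T.chain lam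
  chain_zero := by
    rw [← Fin.castSucc_zero, Fin.snoc_castSucc, T.chain_zero]
  chain_last := by simp
  chain_mono := by
    intro i
    refine Fin.lastCases ?_ (fun j => ?_) i
    · rw [Fin.snoc_castSucc, T.chain_last, Fin.succ_last, Fin.snoc_last]; exact h
    · rw [Fin.snoc_castSucc, Fin.succ_castSucc, Fin.snoc_castSucc]
      exact T.chain_mono j
  tiling := Fin.snoc (α := fun _ => Finset (Finset Cell)) T.tiling D
  tiling_strip := by
    intro i
    refine Fin.lastCases ?_ (fun j => ?_) i
    · rw [Fin.snoc_castSucc, T.chain_last, Fin.succ_last, Fin.snoc_last, Fin.snoc_last]; exact hD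
    · rw [Fin.snoc_castSucc, Fin.succ_castSucc, Fin.snoc_castSucc, Fin.snoc_castSucc]
      exact T.tiling_strip j

/-- Triples `(nu, T, D)` consisting of a tableau `T` of shape `nu/mu` and a last strip `D` on
`lam/nu`. -/
abbrev LastStripData (n N : ℕ) (lam mu : YoungDiagram) : Type :=
  Σ nu : {nu : YoungDiagram // nu ≤ lam},
    RibbonTableau n N nu mu × {D // IsHStripTiling n (lam.cells \ nu.1.cells) D}

theorem snocTableau_bijective (n N : ℕ) (lam mu : YoungDiagram) :
    Function.Bijective (fun p : LastStripData n N lam mu =>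
      snocTableau p.2.1 lam p.1.2 p.2.2.1 p.2.2.2) := by
  constructor
  · rintro ⟨⟨nu, hnu⟩, T, ⟨D, hD⟩⟩ ⟨⟨nu', hnu'⟩, T', ⟨D', hD'⟩⟩ h
    have hc := congrArg RibbonTableau.chain h
    have ht := congrArg RibbonTableau.tiling h
    simp only [snocTableau] at hc ht
    obtain ⟨hc1, -⟩ := Fin.snoc_inj.1 hc
    obtain ⟨ht1, rfl⟩ := Fin.snoc_inj.1 ht
    have : nu = nu' :=
      T.chain_last.symm.trans ((congrFun hc1 _).trans T'.chain_last)
    subst this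
    obtain rfl := ribbonTableau_ext hc1 ht1
    rfl
  · intro T
    refine ⟨⟨⟨T.chain (Fin.last N).castSucc, ?_⟩,
      ⟨fun i => T.chain i.castSucc, T.chain_zero, rfl, fun i => T.chain_mono i.castSucc,
        fun i => T.tiling i.castSucc, fun i => T.tiling_strip i.castSucc⟩,
      ⟨T.tiling (Fin.last N), ?_⟩⟩, ?_⟩
    · have := T.chain_mono (Fin.last N)
      rwa [Fin.succ_last, T.chain_last] at this
    · have := T.tiling_strip (Fin.last N)
      rwa [Fin.succ_last, T.chain_last] at this
    · refine ribbonTableau_ext ?_ ?_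
      · funext i
        refine Fin.lastCases ?_ (fun j => ?_) i
        · simp [snocTableau, T.chain_last]
        · simp [snocTableau]
      · funext i
        refine Fin.lastCases ?_ (fun j => ?_) i
        · simp [snocTableau]
        · simp [snocTableau]

instance finite_sub (lam : YoungDiagram) : Finite {nu : YoungDiagram // nu ≤ lam} :=
  ((finite_card_le lam.card).subset fun _ h => card_le_of_le h).to_subtype

instance finite_tilings' (n : ℕ) (S : Finset Cell) : Finite {D // IsHStripTiling n S D} :=
  (finite_tilings n S).to_subtype

instance finite_ribbonTableau (n N : ℕ) (lam mu : YoungDiagram) :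
    Finite (RibbonTableau n N lam mu) := by
  induction N generalizing lam with
  | zero =>
    have : Subsingleton (RibbonTableau n 0 lam mu) := by
      constructor
      intro S T
      refine ribbonTableau_ext ?_ (funext fun i => i.elim0)
      funext i
      obtain rfl : i = 0 := Fin.fin_one_eq_zero i
      rw [S.chain_zero, T.chain_zero]
    infer_instance
  | succ N ih =>
    exact Finite.of_surjective _ (snocTableau_bijective n N lam mu).2

variable {A : Type*} [CommSemiring A]

/-- The generating function of all `n`-ribbon tableaux of straight shape `lam` with `N` letters,
where the strip of the letter `i`, tiled by `D`, has weight `w i D`. -/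
def tabSum (n : ℕ) (w : ℕ → Finset (Finset Cell) → A) (N : ℕ) (lam : YoungDiagram) : A :=
  ∑ᶠ T : RibbonTableau n N lam ⊥, ∏ i : Fin N, w i (T.tiling i)

/-- The total weight of all tilings of `lam/nu` as a horizontal `n`-ribbon strip. -/
def stripSum (n : ℕ) (w : Finset (Finset Cell) → A) (lam nu : YoungDiagram) : A :=
  if nu ≤ lam then ∑ᶠ D : {D // IsHStripTiling n (lam.cells \ nu.cells) D}, w D.1 else 0

theorem tabSum_zero (n : ℕ) (w : ℕ → Finset (Finset Cell) → A) (lam : YoungDiagram) :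
    tabSum n w 0 lam = if lam = ⊥ then 1 else 0 := by
  unfold tabSum
  split_ifs with h
  · subst h
    have T0 : RibbonTableau n 0 ⊥ ⊥ :=
      ⟨fun _ => ⊥, rfl, rfl, fun _ => le_rfl, fun i => i.elim0, fun i => i.elim0⟩
    have : Unique (RibbonTableau n 0 ⊥ ⊥) := by
      refine ⟨⟨T0⟩, fun S => ribbonTableau_ext ?_ (funext fun i => i.elim0)⟩
      funext i
      obtain rfl : i = 0 := Fin.fin_one_eq_zero i
      rw [S.chain_zero, RibbonTableau.chain_zero]
    rw [finsum_unique]; simp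
  · have : IsEmpty (RibbonTableau n 0 lam ⊥) := ⟨fun T => h (T.chain_last.symm.trans T.chain_zero)⟩
    exact finsum_of_isEmpty _

/-- Recursion for tableau generating functions: split off the strip of the largest letter. -/
theorem tabSum_succ (n : ℕ) (w : ℕ → Finset (Finset Cell) → A) (N : ℕ) (lam : YoungDiagram)
    {m : ℕ} (hm : lam.card ≤ m) :
    tabSum n w (N + 1) lam =
      ∑ nu ∈ smallDiagrams m, stripSum n (w N) lam nu * tabSum n w N nu := by
  have key : tabSum n w (N + 1) lam =
      ∑ᶠ p : LastStripData n N lam ⊥, (∏ i : Fin N, w i (p.2.1.tiling i)) * w N p.2.2.1 := by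
    unfold tabSum
    refine (finsum_eq_of_bijective _ (snocTableau_bijective n N lam ⊥) ?_).symm
    intro p
    rw [Fin.prod_univ_castSucc]
    simp [snocTableau]
  have := fun nu => Fintype.ofFinite (RibbonTableau n N nu ⊥)
  have := fun nu : YoungDiagram =>
    Fintype.ofFinite {D // IsHStripTiling n (lam.cells \ nu.cells) D}
  have := Fintype.ofFinite {nu : YoungDiagram // nu ≤ lam}
  rw [key, finsum_eq_sum_of_fintype, Fintype.sum_sigma]
  have h2 : ∀ nu : {nu : YoungDiagram // nu ≤ lam},
      (∑ y : RibbonTableau n N nu.1 ⊥ × {D // IsHStripTiling n (lam.cells \ nu.1.cells) D},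
        (∏ i : Fin N, w i (y.1.tiling i)) * w N y.2.1) =
      stripSum n (w N) lam nu.1 * tabSum n w N nu.1 := by
    intro nu
    rw [stripSum, if_pos nu.2, tabSum, finsum_eq_sum_of_fintype, finsum_eq_sum_of_fintype,
      mul_comm, Fintype.sum_mul_sum, Fintype.sum_prod_type]
  rw [Finset.sum_congr rfl fun nu _ => h2 nu]
  rw [← Finset.sum_filter_of_ne (s := smallDiagrams m) (p := fun nu => nu ≤ lam)
    (f := fun nu => stripSum n (w N) lam nu * tabSum n w N nu)]
  · refine (Finset.sum_subtype _ (fun nu => ?_)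
      (fun nu => stripSum n (w N) lam nu * tabSum n w N nu)).symm
    rw [Finset.mem_filter, mem_smallDiagrams]
    exact ⟨fun h => h.2, fun h => ⟨(card_le_of_le h).trans hm, h⟩⟩
  · intro nu _ h
    by_contra hc
    exact h (by rw [stripSum, if_neg hc, zero_mul])

end

noncomputable section

/-! ### Row lengths -/

theorem le_iff_rowLen {nu lam : YoungDiagram} : nu ≤ lam ↔ ∀ i, nu.rowLen i ≤ lam.rowLen i := by
  constructor
  · intro h i
    by_contra hc
    push Not at hc
    have h1 : (i, lam.rowLen i) ∈ nu := YoungDiagram.mem_iff_lt_rowLen.2 hc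
    exact absurd (YoungDiagram.mem_iff_lt_rowLen.1 (h h1)) (lt_irrefl _)
  · rintro h ⟨i, j⟩ hx
    have hx' : (i, j) ∈ nu := hx
    exact YoungDiagram.mem_iff_lt_rowLen.2
      ((YoungDiagram.mem_iff_lt_rowLen.1 hx').trans_le (h i))

theorem eq_of_rowLen {nu lam : YoungDiagram} (h : ∀ i, nu.rowLen i = lam.rowLen i) : nu = lam :=
  le_antisymm (le_iff_rowLen.2 fun i => (h i).le) (le_iff_rowLen.2 fun i => (h i).ge)

theorem mem_sdiff_iff {nu lam : YoungDiagram} {i j : ℕ} :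
    (i, j) ∈ lam.cells \ nu.cells ↔ nu.rowLen i ≤ j ∧ j < lam.rowLen i := by
  rw [Finset.mem_sdiff, YoungDiagram.mem_cells, YoungDiagram.mem_cells,
    YoungDiagram.mem_iff_lt_rowLen, YoungDiagram.mem_iff_lt_rowLen, not_lt, and_comm]

theorem rowLen_succ_le (lam : YoungDiagram) (i : ℕ) : lam.rowLen (i + 1) ≤ lam.rowLen i :=
  lam.rowLen_anti _ _ (Nat.le_succ i)

@[simp] theorem rowLen_bot (i : ℕ) : (⊥ : YoungDiagram).rowLen i = 0 := by
  by_contra h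
  exact YoungDiagram.notMem_bot (i, 0) (YoungDiagram.mem_iff_lt_rowLen.2 (Nat.pos_of_ne_zero h))

/-- Every weakly decreasing sequence that vanishes eventually is the sequence of row lengths of a
Young diagram. -/
theorem exists_rowLen (f : ℕ → ℕ) (hf : ∀ i, f (i + 1) ≤ f i) (N : ℕ) (hN : f N = 0) :
    ∃ lam : YoungDiagram, ∀ i, lam.rowLen i = f i := by
  have hanti : Antitone f := antitone_nat_of_succ_le hf
  let lam : YoungDiagram :=
    { cells := (Finset.range N ×ˢ Finset.range (f 0)).filter fun c => c.2 < f c.1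
      isLowerSet := by
        rintro ⟨a, b⟩ ⟨c, d⟩ ⟨hca, hdb⟩ hab
        simp only at hca hdb
        simp only [Finset.coe_filter, Finset.mem_product, Finset.mem_range, Set.mem_ofPred_eq]
          at hab ⊢
        have := hanti hca
        omega }
  have hmem : ∀ i j, (i, j) ∈ lam ↔ j < f i := by
    intro i j
    change (i, j) ∈ lam.cells ↔ _
    simp only [lam, Finset.mem_filter, Finset.mem_product, Finset.mem_range]
    constructor
    · exact fun h => h.2
    · intro h
      have h1 := hanti (Nat.zero_le i)
      refine ⟨⟨?_, by omega⟩, h⟩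
      by_contra hc
      have := hanti (not_lt.1 hc)
      omega
  refine ⟨lam, fun i => ?_⟩
  have := fun j => (YoungDiagram.mem_iff_lt_rowLen (μ := lam) (i := i) (j := j)).symm.trans
    (hmem i j)
  have h1 := this (f i)
  have h2 := this (lam.rowLen i)
  omega

theorem rowLen_eq_zero_of_card_le (lam : YoungDiagram) {i : ℕ} (h : lam.card ≤ i) :
    lam.rowLen i = 0 := by
  by_contra hc
  have hsub : (Finset.range (i + 1)).image (fun a => (a, 0)) ⊆ lam.cells := by
    intro x hx
    obtain ⟨a, ha, rfl⟩ := Finset.mem_image.1 hx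
    rw [Finset.mem_range] at ha
    exact lam.up_left_mem (i2 := i) (j2 := 0) (by omega) le_rfl
      (YoungDiagram.mem_iff_lt_rowLen.2 (by omega))
  have hc := Finset.card_le_card hsub
  rw [Finset.card_image_of_injective _ (fun a b h => (Prod.ext_iff.1 h).1), Finset.card_range]
    at hc
  exact absurd hc (by change ¬ (_ ≤ lam.card); omega)

theorem card_sdiff_eq_sum {nu lam : YoungDiagram} {N : ℕ} (hN : lam.rowLen N = 0) :
    (lam.cells \ nu.cells).card = ∑ i ∈ Finset.range N, (lam.rowLen i - nu.rowLen i) := by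
  have hmaps : ∀ c ∈ lam.cells \ nu.cells, c.1 ∈ Finset.range N := by
    rintro ⟨i, j⟩ h
    rw [mem_sdiff_iff] at h
    rw [Finset.mem_range]
    by_contra hc
    have := lam.rowLen_anti N i (not_lt.1 hc)
    omega
  rw [Finset.card_eq_sum_card_fiberwise hmaps]
  refine Finset.sum_congr rfl fun i _ => ?_
  have : (lam.cells \ nu.cells).filter (fun c => c.1 = i) =
      (Finset.Ico (nu.rowLen i) (lam.rowLen i)).image fun j => (i, j) := by
    ext ⟨a, b⟩
    simp only [Finset.mem_filter, mem_sdiff_iff, Finset.mem_image, Finset.mem_Ico, Prod.mk.injEq]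
    constructor
    · rintro ⟨h, rfl⟩
      exact ⟨b, h, rfl, rfl⟩
    · rintro ⟨j, h, rfl, rfl⟩
      exact ⟨h, rfl⟩
  rw [this, Finset.card_image_of_injective _ (fun a b h => (Prod.ext_iff.1 h).2), Nat.card_Ico]

theorem card_eq_sum {lam : YoungDiagram} {N : ℕ} (hN : lam.rowLen N = 0) :
    lam.card = ∑ i ∈ Finset.range N, lam.rowLen i := by
  have := card_sdiff_eq_sum (nu := ⊥) hN
  simpa using this

/-! ### Single ribbons as horizontal strips -/

variable {A : Type*} [CommSemiring A]

theorem northernCond_singleton (S : Finset Cell) : NorthernCond S {S} := by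
  intro R hR c hc
  obtain rfl := Finset.mem_singleton.1 hR
  by_contra h
  push Not at h
  obtain ⟨h0, hmem⟩ := h
  have := (hc.2 _ hmem).2 rfl
  simp only at this
  omega

/-- The weight that selects standard tableaux: a strip consisting of one ribbon of spin `s`
contributes `u s`, any other strip contributes `0`. -/
def stdWeight (u : ℕ → A) (_ : ℕ) (D : Finset (Finset Cell)) : A :=
  if D.card = 1 then u (tilingSpin D) else 0

/-- A horizontal strip tiled by a single ribbon is just a ribbon, as the northern condition is
automatic in that case. -/
theorem stripSum_std (n : ℕ) (u : ℕ → A) (N : ℕ) (lam nu : YoungDiagram) :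
    stripSum n (stdWeight u N) lam nu =
      if RibbonStep n lam nu then u (ribbonSpin (lam.cells \ nu.cells)) else 0 := by
  unfold stripSum RibbonStep
  by_cases hle : nu ≤ lam
  swap
  · simp [hle]
  simp only [hle, if_true, true_and]
  set S := lam.cells \ nu.cells with hS
  have hone : ∀ D, IsHStripTiling n S D → D.card = 1 → D = {S} := by
    intro D hD hc
    obtain ⟨R, rfl⟩ := Finset.card_eq_one.1 hc
    have := hD.1.2.2
    simp only [Finset.singleton_biUnion, id] at this
    rw [this]
  by_cases hR : IsRibbon n S
  · have hT : IsHStripTiling n S {S} := by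
      refine ⟨⟨?_, ?_, ?_⟩, northernCond_singleton S⟩
      · intro R hR'
        rwa [Finset.mem_singleton.1 hR']
      · simp
      · simp
    rw [if_pos hR, finsum_eq_single _ ⟨{S}, hT⟩]
    · simp [stdWeight, tilingSpin]
    · rintro ⟨D, hD⟩ hne
      rw [stdWeight, if_neg]
      intro hc
      exact hne (Subtype.ext (hone D hD hc))
  · rw [if_neg hR]
    refine finsum_eq_zero_of_forall_eq_zero ?_
    rintro ⟨D, hD⟩
    rw [stdWeight, if_neg]
    intro hc
    obtain rfl := hone D hD hc
    exact hR (hD.1.1 S (by simp))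

/-- The generating function of standard tableaux of shape `lam` by spin. -/
def stdSum (n : ℕ) (u : ℕ → A) (k : ℕ) (lam : YoungDiagram) : A := tabSum n (stdWeight u) k lam

theorem stdSum_succ (n : ℕ) (u : ℕ → A) (k : ℕ) (lam : YoungDiagram) {m : ℕ}
    (hm : lam.card ≤ m) :
    stdSum n u (k + 1) lam = ∑ nu ∈ smallDiagrams m,
      (if RibbonStep n lam nu then u (ribbonSpin (lam.cells \ nu.cells)) else 0) *
        stdSum n u k nu := by
  unfold stdSum
  rw [tabSum_succ n _ k lam hm]
  exact Finset.sum_congr rfl fun nu _ => by rw [stripSum_std]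

theorem RibbonStep.card_eq {n : ℕ} {lam nu : YoungDiagram} (h : RibbonStep n lam nu) :
    lam.card = nu.card + n := by
  rw [← card_sdiff_add h.1, h.2.1, add_comm]

theorem exists_step_of_stdSum_ne_zero {n : ℕ} {u : ℕ → A} {k : ℕ} {lam : YoungDiagram}
    (h : stdSum n u (k + 1) lam ≠ 0) :
    ∃ nu, RibbonStep n lam nu ∧ stdSum n u k nu ≠ 0 := by
  rw [stdSum_succ n u k lam le_rfl] at h
  obtain ⟨nu, _, hne⟩ := Finset.exists_ne_zero_of_sum_ne_zero h
  refine ⟨nu, ?_, fun h0 => hne (by rw [h0, mul_zero])⟩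
  by_contra hc
  exact hne (by rw [if_neg hc, zero_mul])

theorem eq_bot_of_stdSum_ne_zero {n : ℕ} {u : ℕ → A} {lam : YoungDiagram}
    (h : stdSum n u 0 lam ≠ 0) : lam = ⊥ := by
  by_contra hc
  exact h (by rw [stdSum, tabSum_zero, if_neg hc])

theorem card_of_stdSum_ne_zero {n : ℕ} {u : ℕ → A} {k : ℕ} {lam : YoungDiagram}
    (h : stdSum n u k lam ≠ 0) : lam.card = n * k := by
  induction k generalizing lam with
  | zero => rw [eq_bot_of_stdSum_ne_zero h]; simp
  | succ k ih =>
    obtain ⟨nu, hs, hne⟩ := exists_step_of_stdSum_ne_zero h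
    rw [hs.card_eq, ih hne]; ring

end

noncomputable section

/-! ### Boxes and horizontal strips -/

variable {A : Type*} [CommSemiring A]

theorem card_bot : (⊥ : YoungDiagram).card = 0 := rfl

theorem isRibbon_one_singleton (c : Cell) : IsRibbon 1 {c} := by
  refine ⟨by simp, ?_, ?_, ?_⟩
  · intro a ha b hb
    rw [Finset.mem_singleton.1 ha, Finset.mem_singleton.1 hb]
    exact Relation.ReflTransGen.refl
  · rintro ⟨i, j, h1, h2, -, -⟩
    have := (Finset.mem_singleton.1 h1).trans (Finset.mem_singleton.1 h2).symm
    simp at this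
  · refine ⟨⟨Finset.Iic c, by simpa using isLowerSet_Iic c⟩,
      ⟨Finset.Iio c, by simpa using isLowerSet_Iio c⟩, ?_, ?_⟩
    · intro x hx
      exact Finset.mem_Iic.2 (le_of_lt (Finset.mem_Iio.1 hx))
    · ext x
      simp only [Finset.mem_sdiff, Finset.mem_singleton, Finset.mem_Iic, Finset.mem_Iio]
      constructor
      · rintro rfl; simp
      · rintro ⟨h1, h2⟩
        exact h1.lt_or_eq.resolve_left h2

theorem ribbonStep_one_iff {lam nu : YoungDiagram} :
    RibbonStep 1 lam nu ↔ nu ≤ lam ∧ lam.card = nu.card + 1 := by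
  constructor
  · exact fun h => ⟨h.1, h.card_eq⟩
  · rintro ⟨h, hc⟩
    refine ⟨h, ?_⟩
    have := card_sdiff_add h
    obtain ⟨c, hc⟩ := Finset.card_eq_one.1 (show (lam.cells \ nu.cells).card = 1 by omega)
    rw [hc]
    exact isRibbon_one_singleton c

/-- `lam/nu` is a horizontal strip, in terms of interlacing row lengths. -/
def Interlace (lam nu : YoungDiagram) : Prop :=
  nu ≤ lam ∧ ∀ i, lam.rowLen (i + 1) ≤ nu.rowLen i

/-- For `n = 1` a horizontal ribbon strip is an ordinary horizontal strip, tiled by its cells. -/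
theorem isHStripTiling_one_iff {lam nu : YoungDiagram} (hle : nu ≤ lam)
    (D : Finset (Finset Cell)) :
    IsHStripTiling 1 (lam.cells \ nu.cells) D ↔
      Interlace lam nu ∧ D = (lam.cells \ nu.cells).image fun c => {c} := by
  set S := lam.cells \ nu.cells with hS
  have htop : ∀ c : Cell, TopRightCell {c} c := by
    intro c
    refine ⟨by simp, fun d hd => ?_⟩
    rw [Finset.mem_singleton.1 hd]
    exact ⟨le_rfl, fun _ => le_rfl⟩
  constructor
  · rintro ⟨⟨hrib, -, hun⟩, hnorth⟩
    have hsing : ∀ c ∈ S, ({c} : Finset Cell) ∈ D := by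
      intro c hc
      rw [← hun, Finset.mem_biUnion] at hc
      obtain ⟨R, hR, hcR⟩ := hc
      obtain ⟨d, rfl⟩ := Finset.card_eq_one.1 (hrib R hR).1
      rwa [← Finset.mem_singleton.1 hcR] at hR
    refine ⟨⟨hle, fun i => ?_⟩, ?_⟩
    · by_contra hc
      push Not at hc
      have h1 : (i + 1, nu.rowLen i) ∈ S :=
        mem_sdiff_iff.2 ⟨rowLen_succ_le nu i, hc⟩
      have h2 : (i, nu.rowLen i) ∈ S :=
        mem_sdiff_iff.2 ⟨le_rfl, hc.trans_le (rowLen_succ_le lam i)⟩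
      rcases hnorth _ (hsing _ h1) _ (htop _) with h | h
      · simp at h
      · exact h h2
    · ext R
      rw [Finset.mem_image]
      constructor
      · intro hR
        obtain ⟨d, rfl⟩ := Finset.card_eq_one.1 (hrib R hR).1
        refine ⟨d, ?_, rfl⟩
        rw [← hun, Finset.mem_biUnion]
        exact ⟨{d}, hR, by simp⟩
      · rintro ⟨c, hc, rfl⟩
        exact hsing c hc
  · rintro ⟨hI, rfl⟩
    refine ⟨⟨?_, ?_, ?_⟩, ?_⟩
    · intro R hR
      obtain ⟨c, -, rfl⟩ := Finset.mem_image.1 hR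
      exact isRibbon_one_singleton c
    · intro R hR R' hR' hne
      obtain ⟨c, -, rfl⟩ := Finset.mem_image.1 (Finset.mem_coe.1 hR)
      obtain ⟨c', -, rfl⟩ := Finset.mem_image.1 (Finset.mem_coe.1 hR')
      rw [Finset.disjoint_singleton]
      rintro rfl
      exact hne rfl
    · ext c
      rw [Finset.mem_biUnion]
      constructor
      · rintro ⟨R, hR, hc⟩
        obtain ⟨d, hd, rfl⟩ := Finset.mem_image.1 hR
        rwa [Finset.mem_singleton.1 hc]
      · intro hc
        exact ⟨{c}, Finset.mem_image.2 ⟨c, hc, rfl⟩, Finset.mem_singleton_self c⟩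
    · intro R hR d hd
      obtain ⟨c, hc, rfl⟩ := Finset.mem_image.1 hR
      obtain rfl := Finset.mem_singleton.1 hd.1
      obtain ⟨i, j⟩ := d
      rcases i with _ | i
      · exact Or.inl rfl
      · right
        intro hmem
        have h1 := mem_sdiff_iff.1 hc
        have h2 := mem_sdiff_iff.1 hmem
        have := hI.2 i
        simp only [Nat.add_sub_cancel] at h2
        omega

theorem stripSum_one (x : A) (lam nu : YoungDiagram) :
    stripSum 1 (fun D => x ^ D.card) lam nu =
      if Interlace lam nu then x ^ (lam.card - nu.card) else 0 := by
  unfold stripSum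
  by_cases hle : nu ≤ lam
  swap
  · rw [if_neg hle, if_neg fun h => hle h.1]
  rw [if_pos hle]
  split_ifs with hI
  · rw [finsum_eq_single _ ⟨_, (isHStripTiling_one_iff hle _).2 ⟨hI, rfl⟩⟩]
    · dsimp only
      rw [Finset.card_image_of_injective _ Finset.singleton_injective]
      have := card_sdiff_add hle
      congr 1
      omega
    · rintro ⟨D, hD⟩ hne
      exact absurd (Subtype.ext ((isHStripTiling_one_iff hle _).1 hD).2) hne
  · have : IsEmpty {D // IsHStripTiling 1 (lam.cells \ nu.cells) D} :=
      ⟨fun D => hI ((isHStripTiling_one_iff hle _).1 D.2).1⟩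
    exact finsum_of_isEmpty _

/-! ### The Pieri rule for a single box -/

theorem rowLen_of_box {lam nu : YoungDiagram} (h : nu ≤ lam) (hc : lam.card = nu.card + 1) :
    ∃ i, ∀ j, lam.rowLen j = nu.rowLen j + if j = i then 1 else 0 := by
  have h0 := card_sdiff_add h
  obtain ⟨⟨i, a⟩, hia⟩ := Finset.card_eq_one.1 (show (lam.cells \ nu.cells).card = 1 by omega)
  refine ⟨i, fun j => ?_⟩
  have hle := le_iff_rowLen.1 h
  have hmem : ∀ b c, nu.rowLen b ≤ c → c < lam.rowLen b → b = i ∧ c = a := by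
    intro b c h1 h2
    have : (b, c) ∈ lam.cells \ nu.cells := mem_sdiff_iff.2 ⟨h1, h2⟩
    rw [hia, Finset.mem_singleton, Prod.mk.injEq] at this
    exact this
  split_ifs with hj
  · subst hj
    have h1 : (j, a) ∈ lam.cells \ nu.cells := by rw [hia]; simp
    have h2 := mem_sdiff_iff.1 h1
    have h3 := hmem j (nu.rowLen j) le_rfl (by omega)
    by_contra hne
    have h4 := hmem j (nu.rowLen j + 1) (by omega) (by omega)
    omega
  · have := hle j
    by_contra hne
    exact hj (hmem j (nu.rowLen j) le_rfl (by omega)).1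

theorem card_of_box {lam nu : YoungDiagram} {i : ℕ}
    (h : ∀ j, lam.rowLen j = nu.rowLen j + if j = i then 1 else 0) :
    nu ≤ lam ∧ lam.card = nu.card + 1 := by
  refine ⟨le_iff_rowLen.2 fun j => by rw [h]; omega, ?_⟩
  obtain ⟨N, hN⟩ : ∃ N, N = lam.card + nu.card + i + 1 := ⟨_, rfl⟩
  have h1 := rowLen_eq_zero_of_card_le lam (show lam.card ≤ N by omega)
  have h2 := rowLen_eq_zero_of_card_le nu (show nu.card ≤ N by omega)
  rw [card_eq_sum h1, card_eq_sum h2, Finset.sum_congr rfl fun j _ => h j, Finset.sum_add_distrib,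
    Finset.sum_ite_eq' _ i, if_pos (by rw [Finset.mem_range]; omega)]

theorem box_row_inj {i i' : ℕ} {f : ℕ → ℕ}
    (h : ∀ j, (f j + if j = i then 1 else 0) = f j + if j = i' then 1 else 0) : i = i' := by
  by_contra hne
  have := h i
  simp [hne] at this

theorem exists_add_box (nu : YoungDiagram) (i : ℕ)
    (hi : i = 0 ∨ nu.rowLen i < nu.rowLen (i - 1)) :
    ∃ lam : YoungDiagram, ∀ j, lam.rowLen j = nu.rowLen j + if j = i then 1 else 0 := by
  refine exists_rowLen _ (fun j => ?_) (nu.card + i + 1) ?_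
  · have := rowLen_succ_le nu j
    split_ifs with h1 h2
    · omega
    · subst h1; simp at hi; omega
    · omega
    · omega
  · rw [rowLen_eq_zero_of_card_le _ (by omega), if_neg (by omega)]

theorem exists_remove_box (nu : YoungDiagram) (i : ℕ) (hi : nu.rowLen (i + 1) < nu.rowLen i) :
    ∃ sig : YoungDiagram, ∀ j, nu.rowLen j = sig.rowLen j + if j = i then 1 else 0 := by
  obtain ⟨sig, hs⟩ := exists_rowLen (fun j => nu.rowLen j - if j = i then 1 else 0) (fun j => by
    have := rowLen_succ_le nu j
    split_ifs with h1 h2 h3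
    · omega
    · omega
    · subst h3; omega
    · omega) nu.card (by rw [rowLen_eq_zero_of_card_le _ le_rfl]; simp)
  refine ⟨sig, fun j => ?_⟩
  rw [hs]
  split_ifs with h
  · subst h; omega
  · omega

/-- Shapes obtained from `nu` by adding a box so that the result is a horizontal strip over
`rho`. -/
def upSet (m : ℕ) (nu rho : YoungDiagram) : Finset YoungDiagram :=
  (smallDiagrams m).filter fun mu => RibbonStep 1 mu nu ∧ Interlace mu rho

/-- Shapes obtained from `rho` by removing a box so that `nu` is a horizontal strip over the
result. -/
def downSet (m : ℕ) (nu rho : YoungDiagram) : Finset YoungDiagram :=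
  (smallDiagrams m).filter fun sig => RibbonStep 1 rho sig ∧ Interlace nu sig

/-- When `nu/rho` is a horizontal strip, the rows where a box can be added are row `0` and the rows
just below those where a box can be removed. -/
theorem card_upSet_of_interlace {m : ℕ} {nu rho : YoungDiagram} (hm : nu.card + 1 ≤ m)
    (h : Interlace nu rho) : (upSet m nu rho).card = (downSet m nu rho).card + 1 := by
  set I := (Finset.range (m + 1)).filter fun i => i = 0 ∨ nu.rowLen i < rho.rowLen (i - 1) with hI
  set J := (Finset.range m).filter fun i => nu.rowLen (i + 1) < rho.rowLen i with hJ
  have hle := le_iff_rowLen.1 h.1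
  have hcle := card_le_of_le h.1
  have hIu : I.card = (upSet m nu rho).card := by
    have hex : ∀ i ∈ I, ∃ lam : YoungDiagram,
        ∀ j, lam.rowLen j = nu.rowLen j + if j = i then 1 else 0 := by
      intro i hi
      apply exists_add_box
      rcases (Finset.mem_filter.1 hi).2 with h' | h'
      · exact Or.inl h'
      · exact Or.inr (h'.trans_le (hle _))
    refine Finset.card_bij (fun i hi => (hex i hi).choose) ?_ ?_ ?_
    · intro i hi
      have hs := (hex i hi).choose_spec
      obtain ⟨h1, h2⟩ := card_of_box hs
      refine Finset.mem_filter.2 ⟨mem_smallDiagrams.2 (by omega), ribbonStep_one_iff.2 ⟨h1, h2⟩,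
        h.1.trans h1, fun j => ?_⟩
      rw [hs]
      have := h.2 j
      split_ifs with hj
      · have := (Finset.mem_filter.1 hi).2
        rw [← hj, Nat.add_sub_cancel] at this
        omega
      · omega
    · intro i hi i' hi' heq
      have hs := (hex i hi).choose_spec
      have hs' := (hex i' hi').choose_spec
      rw [heq] at hs
      exact box_row_inj fun j => (hs j).symm.trans (hs' j)
    · intro mu hmu
      obtain ⟨-, h1, h2⟩ := Finset.mem_filter.1 hmu
      obtain ⟨i, hi⟩ := rowLen_of_box h1.1 h1.card_eq
      have hiI : i ∈ I := by
        rw [hI, Finset.mem_filter, Finset.mem_range]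
        rcases i with _ | i
        · exact ⟨by omega, Or.inl rfl⟩
        · have h3 := h2.2 i
          rw [hi, if_pos rfl] at h3
          refine ⟨?_, Or.inr h3⟩
          by_contra hc
          have := rowLen_eq_zero_of_card_le rho (show rho.card ≤ i by omega)
          omega
      refine ⟨i, hiI, eq_of_rowLen fun j => ?_⟩
      rw [(hex i hiI).choose_spec, hi]
  have hJd : J.card = (downSet m nu rho).card := by
    have hex : ∀ i ∈ J, ∃ sig : YoungDiagram,
        ∀ j, rho.rowLen j = sig.rowLen j + if j = i then 1 else 0 := by
      intro i hi
      apply exists_remove_box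
      exact (hle _).trans_lt (Finset.mem_filter.1 hi).2
    refine Finset.card_bij (fun i hi => (hex i hi).choose) ?_ ?_ ?_
    · intro i hi
      have hs := (hex i hi).choose_spec
      obtain ⟨h1, h2⟩ := card_of_box hs
      refine Finset.mem_filter.2 ⟨mem_smallDiagrams.2 (by omega), ribbonStep_one_iff.2 ⟨h1, h2⟩,
        h1.trans h.1, fun j => ?_⟩
      have h3 := hs j
      have := h.2 j
      split_ifs at h3 with hj
      · have := (Finset.mem_filter.1 hi).2
        rw [← hj] at this
        omega
      · omega
    · intro i hi i' hi' heq
      have hs := (hex i hi).choose_spec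
      have hs' := (hex i' hi').choose_spec
      rw [heq] at hs
      exact box_row_inj fun j => (hs j).symm.trans (hs' j)
    · intro sig hsig
      obtain ⟨-, h1, h2⟩ := Finset.mem_filter.1 hsig
      obtain ⟨i, hi⟩ := rowLen_of_box h1.1 h1.card_eq
      have hiJ : i ∈ J := by
        rw [hJ, Finset.mem_filter, Finset.mem_range]
        have h3 := h2.2 i
        have h4 := hi i
        rw [if_pos rfl] at h4
        refine ⟨?_, by omega⟩
        by_contra hc
        have := rowLen_eq_zero_of_card_le rho (show rho.card ≤ i by omega)
        omega
      refine ⟨i, hiJ, eq_of_rowLen fun j => ?_⟩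
      have h3 := (hex i hiJ).choose_spec j
      have h4 := hi j
      omega
  have hIJ : I = insert 0 (J.image (· + 1)) := by
    ext i
    rcases i with _ | i
    · simp [hI]
    · simp [hI, hJ]
  rw [← hIu, ← hJd, hIJ, Finset.card_insert_of_notMem (by simp),
    Finset.card_image_of_injective _ (add_left_injective 1)]

theorem rowLen_sup (nu rho : YoungDiagram) (i : ℕ) :
    (rho ⊔ nu).rowLen i = max (rho.rowLen i) (nu.rowLen i) := by
  have h : ∀ j, j < (rho ⊔ nu).rowLen i ↔ j < rho.rowLen i ∨ j < nu.rowLen i := by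
    intro j
    rw [← YoungDiagram.mem_iff_lt_rowLen, ← YoungDiagram.mem_iff_lt_rowLen,
      ← YoungDiagram.mem_iff_lt_rowLen, YoungDiagram.mem_sup]
  have h1 := h ((rho ⊔ nu).rowLen i)
  have h2 := h (rho.rowLen i)
  have h3 := h (nu.rowLen i)
  omega

theorem rowLen_inf (nu rho : YoungDiagram) (i : ℕ) :
    (rho ⊓ nu).rowLen i = min (rho.rowLen i) (nu.rowLen i) := by
  have h : ∀ j, j < (rho ⊓ nu).rowLen i ↔ j < rho.rowLen i ∧ j < nu.rowLen i := by
    intro j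
    rw [← YoungDiagram.mem_iff_lt_rowLen, ← YoungDiagram.mem_iff_lt_rowLen,
      ← YoungDiagram.mem_iff_lt_rowLen, YoungDiagram.mem_inf]
  have h1 := h ((rho ⊓ nu).rowLen i)
  have h2 := h (rho.rowLen i)
  have h3 := h (nu.rowLen i)
  omega

theorem card_sup_add_card_inf (nu rho : YoungDiagram) :
    (rho ⊔ nu).card + (rho ⊓ nu).card = rho.card + nu.card :=
  Finset.card_union_add_card_inter rho.cells nu.cells

theorem eq_of_le_of_card_le {nu lam : YoungDiagram} (h : nu ≤ lam) (hc : lam.card ≤ nu.card) :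
    nu = lam :=
  YoungDiagram.ext (Finset.eq_of_subset_of_card_le (YoungDiagram.cells_subset_iff.2 h) hc)

/-- When `nu/rho` is not a horizontal strip, adding a box to `nu` can only lead to `rho ⊔ nu`, and
removing one from `rho` only to `rho ⊓ nu`. -/
theorem card_upSet_of_not_interlace {m : ℕ} {nu rho : YoungDiagram} (hm : nu.card + 1 ≤ m)
    (hm' : rho.card ≤ m)
    (h : ¬ Interlace nu rho) : (upSet m nu rho).card = (downSet m nu rho).card := by
  by_cases hle : rho ≤ nu
  · rw [upSet, downSet, Finset.filter_false_of_mem, Finset.filter_false_of_mem]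
    · rintro sig - ⟨h1, h2⟩
      exact h ⟨hle, fun i => (h2.2 i).trans (le_iff_rowLen.1 h1.1 i)⟩
    · rintro mu - ⟨h1, h2⟩
      exact h ⟨hle, fun i => (le_iff_rowLen.1 h1.1 _).trans (h2.2 i)⟩
  · have hcard := card_sup_add_card_inf nu rho
    have hup : upSet m nu rho = if RibbonStep 1 (rho ⊔ nu) nu ∧ Interlace (rho ⊔ nu) rho
        then {rho ⊔ nu} else ∅ := by
      have huniq : ∀ mu, RibbonStep 1 mu nu ∧ Interlace mu rho → mu = rho ⊔ nu := by
        rintro mu ⟨h1, h2⟩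
        refine (eq_of_le_of_card_le (sup_le h2.1 h1.1) ?_).symm
        rw [h1.card_eq]
        by_contra hc
        have := eq_of_le_of_card_le (le_sup_right : nu ≤ rho ⊔ nu) (by omega)
        exact hle (this ▸ le_sup_left)
      ext mu
      rw [upSet, Finset.mem_filter, mem_smallDiagrams]
      constructor
      · rintro ⟨-, h1⟩
        obtain rfl := huniq mu h1
        rw [if_pos h1]; simp
      · intro h1
        split_ifs at h1 with h2
        · rw [Finset.mem_singleton.1 h1]
          exact ⟨h2.1.card_eq.trans_le hm, h2⟩
        · simp at h1
    have hdown : downSet m nu rho = if RibbonStep 1 rho (rho ⊓ nu) ∧ Interlace nu (rho ⊓ nu)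
        then {rho ⊓ nu} else ∅ := by
      have huniq : ∀ sig, RibbonStep 1 rho sig ∧ Interlace nu sig → sig = rho ⊓ nu := by
        rintro sig ⟨h1, h2⟩
        refine eq_of_le_of_card_le (le_inf h1.1 h2.1) ?_
        have h3 := h1.card_eq
        by_contra hc
        have := eq_of_le_of_card_le (inf_le_left : rho ⊓ nu ≤ rho) (by omega)
        exact hle (this ▸ inf_le_right)
      ext sig
      rw [downSet, Finset.mem_filter, mem_smallDiagrams]
      constructor
      · rintro ⟨-, h1⟩
        obtain rfl := huniq sig h1
        rw [if_pos h1]; simp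
      · intro h1
        split_ifs at h1 with h2
        · rw [Finset.mem_singleton.1 h1]
          exact ⟨(card_le_of_le inf_le_left).trans hm', h2⟩
        · simp at h1
    have hiff : (RibbonStep 1 (rho ⊔ nu) nu ∧ Interlace (rho ⊔ nu) rho) ↔
        (RibbonStep 1 rho (rho ⊓ nu) ∧ Interlace nu (rho ⊓ nu)) := by
      rw [ribbonStep_one_iff, ribbonStep_one_iff, Interlace, Interlace]
      simp only [le_sup_right, le_sup_left, inf_le_left, inf_le_right, true_and, rowLen_sup,
        rowLen_inf]
      have h1 := rowLen_succ_le nu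
      have h2 := rowLen_succ_le rho
      refine and_congr (by omega) (forall_congr' fun i => ?_)
      have h1 := rowLen_succ_le nu i
      have h2 := rowLen_succ_le rho i
      omega
    rw [hup, hdown]
    by_cases hP : RibbonStep 1 rho (rho ⊓ nu) ∧ Interlace nu (rho ⊓ nu)
    · rw [if_pos (hiff.2 hP), if_pos hP]; simp
    · rw [if_neg (fun h' => hP (hiff.1 h')), if_neg hP]

/-- The commutation relation between removing a box and adding a horizontal strip:
`D H(x) = H(x) D + x H(x)`, read off at a matrix coefficient. -/
theorem box_strip_commute (x : A) {m : ℕ} {nu rho : YoungDiagram} (hm : nu.card + 1 ≤ m)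
    (hm' : rho.card ≤ m) :
    (∑ mu ∈ smallDiagrams m, if RibbonStep 1 mu nu then
        (if Interlace mu rho then x ^ (mu.card - rho.card) else 0) else 0) =
      (∑ sig ∈ smallDiagrams m, if RibbonStep 1 rho sig then
        (if Interlace nu sig then x ^ (nu.card - sig.card) else 0) else 0) +
      x * (if Interlace nu rho then x ^ (nu.card - rho.card) else 0) := by
  have h1 : (∑ mu ∈ smallDiagrams m, if RibbonStep 1 mu nu then
        (if Interlace mu rho then x ^ (mu.card - rho.card) else 0) else 0) =
      (upSet m nu rho).card • x ^ (nu.card + 1 - rho.card) := by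
    rw [← Finset.sum_const, upSet, Finset.sum_filter]
    refine Finset.sum_congr rfl fun mu _ => ?_
    by_cases ha : RibbonStep 1 mu nu
    · simp [ha, ha.card_eq]
    · simp [ha]
  have h2 : (∑ sig ∈ smallDiagrams m, if RibbonStep 1 rho sig then
        (if Interlace nu sig then x ^ (nu.card - sig.card) else 0) else 0) =
      (downSet m nu rho).card • x ^ (nu.card + 1 - rho.card) := by
    rw [← Finset.sum_const, downSet, Finset.sum_filter]
    refine Finset.sum_congr rfl fun sig _ => ?_
    by_cases ha : RibbonStep 1 rho sig
    · have := ha.card_eq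
      have h3 : nu.card + 1 - rho.card = nu.card - sig.card := by omega
      simp [ha, h3]
    · simp [ha]
  rw [h1, h2]
  by_cases h : Interlace nu rho
  · have := card_le_of_le h.1
    rw [card_upSet_of_interlace hm h, if_pos h, add_smul, one_smul, ← pow_succ',
      Nat.sub_add_comm this]
  · rw [card_upSet_of_not_interlace hm hm' h, if_neg h, mul_zero, add_zero]

/-- The Schur polynomial of `mu` in the first `N` of the values `v 0, v 1, …`. -/
def schurVal (v : ℕ → A) (N : ℕ) (mu : YoungDiagram) : A :=
  tabSum 1 (fun i D => v i ^ D.card) N mu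

theorem schurVal_succ (v : ℕ → A) (N : ℕ) (mu : YoungDiagram) {m : ℕ} (hm : mu.card ≤ m) :
    schurVal v (N + 1) mu = ∑ rho ∈ smallDiagrams m,
      (if Interlace mu rho then v N ^ (mu.card - rho.card) else 0) * schurVal v N rho := by
  unfold schurVal
  rw [tabSum_succ 1 _ N mu hm]
  exact Finset.sum_congr rfl fun nu _ => by rw [stripSum_one]

/-- The Pieri rule for one box: `s_1 s_ν = Σ_μ s_μ` over the shapes `μ` obtained from `ν` by adding
a box. -/
theorem schurVal_pieri (v : ℕ → A) (N : ℕ) (nu : YoungDiagram) {m : ℕ} (hm : nu.card + 1 ≤ m) :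
    (∑ mu ∈ smallDiagrams m, if RibbonStep 1 mu nu then schurVal v N mu else 0) =
      (∑ j ∈ Finset.range N, v j) * schurVal v N nu := by
  induction N generalizing nu with
  | zero =>
    rw [Finset.sum_range_zero, zero_mul]
    refine Finset.sum_eq_zero fun mu _ => ?_
    split_ifs with h
    · rw [schurVal, tabSum_zero, if_neg]
      rintro rfl
      have := h.card_eq
      rw [card_bot] at this
      omega
    · rfl
  | succ N ih =>
    have e1 : (∑ mu ∈ smallDiagrams m, if RibbonStep 1 mu nu then schurVal v (N + 1) mu else 0) =
        ∑ rho ∈ smallDiagrams m, (∑ mu ∈ smallDiagrams m, if RibbonStep 1 mu nu then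
          (if Interlace mu rho then v N ^ (mu.card - rho.card) else 0) else 0) *
            schurVal v N rho := by
      rw [Finset.sum_congr rfl fun rho _ => Finset.sum_mul _ _ _, Finset.sum_comm]
      refine Finset.sum_congr rfl fun mu hmu => ?_
      split_ifs with h
      · exact schurVal_succ v N mu (mem_smallDiagrams.1 hmu)
      · simp
    have e2 : ∀ rho ∈ smallDiagrams m, (∑ mu ∈ smallDiagrams m, if RibbonStep 1 mu nu then
          (if Interlace mu rho then v N ^ (mu.card - rho.card) else 0) else 0) *
            schurVal v N rho =
        (∑ sig ∈ smallDiagrams m, (if Interlace nu sig then v N ^ (nu.card - sig.card) else 0) *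
          (if RibbonStep 1 rho sig then schurVal v N rho else 0)) +
        v N * ((if Interlace nu rho then v N ^ (nu.card - rho.card) else 0) *
          schurVal v N rho) := by
      intro rho hrho
      rw [box_strip_commute (v N) hm (mem_smallDiagrams.1 hrho), add_mul, mul_assoc,
        Finset.sum_mul]
      congr 1
      refine Finset.sum_congr rfl fun sig _ => ?_
      split_ifs <;> simp
    rw [e1, Finset.sum_congr rfl e2, Finset.sum_add_distrib, ← Finset.mul_sum,
      ← schurVal_succ v N nu (by omega), Finset.sum_comm, Finset.sum_range_succ, add_mul]
    congr 1
    rw [schurVal_succ v N nu (show nu.card ≤ m by omega), Finset.mul_sum]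
    refine Finset.sum_congr rfl fun sig _ => ?_
    rw [← Finset.mul_sum]
    split_ifs with h
    · rw [ih sig (by have := card_le_of_le h.1; omega)]
      ring
    · simp

theorem schurVal_bot (v : ℕ → A) (N : ℕ) : schurVal v N ⊥ = 1 := by
  induction N with
  | zero => simp [schurVal, tabSum_zero]
  | succ N ih =>
    rw [schurVal_succ v N ⊥ le_rfl, Finset.sum_eq_single ⊥]
    · rw [ih, if_pos ⟨le_rfl, fun i => by simp⟩]; simp
    · intro rho _ hne
      rw [if_neg, zero_mul]
      exact fun h => hne (le_bot_iff.1 h.1)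
    · intro h
      exact absurd (mem_smallDiagrams.2 le_rfl) h

/-- `Σ_μ f^μ s_μ(v) = (v_0 + ⋯ + v_{n-1})^k`. -/
theorem sum_std_mul_schurVal (v : ℕ → A) (n k : ℕ) {m : ℕ} (hm : k ≤ m) :
    (∑ mu ∈ smallDiagrams m, stdSum 1 (fun _ => (1 : A)) k mu * schurVal v n mu) =
      (∑ j ∈ Finset.range n, v j) ^ k := by
  induction k with
  | zero =>
    rw [pow_zero, Finset.sum_eq_single ⊥]
    · rw [schurVal_bot, stdSum, tabSum_zero, if_pos rfl, one_mul]
    · intro mu _ hne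
      rw [stdSum, tabSum_zero, if_neg hne, zero_mul]
    · intro h
      exact absurd (mem_smallDiagrams.2 (show (⊥ : YoungDiagram).card ≤ m from Nat.zero_le m)) h
  | succ k ih =>
    have e1 : ∀ mu ∈ smallDiagrams m, stdSum 1 (fun _ => (1 : A)) (k + 1) mu * schurVal v n mu =
        ∑ nu ∈ smallDiagrams m, stdSum 1 (fun _ => (1 : A)) k nu *
          (if RibbonStep 1 mu nu then schurVal v n mu else 0) := by
      intro mu hmu
      rw [stdSum_succ 1 _ k mu (mem_smallDiagrams.1 hmu), Finset.sum_mul]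
      refine Finset.sum_congr rfl fun nu _ => ?_
      split_ifs
      · ring
      · simp
    rw [Finset.sum_congr rfl e1, Finset.sum_comm, pow_succ', ← ih (by omega), Finset.mul_sum]
    refine Finset.sum_congr rfl fun nu _ => ?_
    rw [← Finset.mul_sum]
    by_cases h0 : stdSum 1 (fun _ => (1 : A)) k nu = 0
    · rw [h0]; simp
    · rw [schurVal_pieri v n nu (by rw [card_of_stdSum_ne_zero h0]; omega)]
      ring

end

noncomputable section

/-! ### Ribbons in terms of row lengths -/

/-- A path from a cell with `P` to a cell without `P` crosses from `P` to its complement in one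
step. -/
theorem Reach.exists_crossing {S : Finset Cell} {a b : Cell} (h : Reach S a b) (P : Cell → Prop)
    (ha : a ∈ S) (hPa : P a) (hPb : ¬ P b) : ∃ x ∈ S, ∃ y ∈ S, Adj x y ∧ P x ∧ ¬ P y := by
  induction h using Relation.ReflTransGen.head_induction_on with
  | refl => exact absurd hPa hPb
  | @head x y hxy _ ih =>
    by_cases hP : P y
    · exact ih hxy.1 hP
    · exact ⟨x, ha, y, hxy.1, hxy.2, hPa, hP⟩

theorem Adj.symm' {x y : Cell} (h : Adj x y) : Adj y x := by
  unfold Adj at *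
  omega

theorem Reach.symm' {S : Finset Cell} {a b : Cell} (ha : a ∈ S) (h : Reach S a b) :
    Reach S b a := by
  induction h using Relation.ReflTransGen.head_induction_on with
  | refl => exact Relation.ReflTransGen.refl
  | head hxy _ ih => exact (ih hxy.1).tail ⟨ha, hxy.2.symm'⟩

/-- `lam/nu` is an `n`-ribbon occupying exactly the rows `t, …, b`, in terms of row lengths. In
terms of beta numbers `λ_i - i`, the entry of `nu` at `b` is increased by `n`, becoming the entry
of `lam` at `t`, and the entries in between move down by one row. -/
structure StepData (n : ℕ) (lam nu : YoungDiagram) (t b : ℕ) : Prop where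
  le : t ≤ b
  above : ∀ i, i < t → lam.rowLen i = nu.rowLen i
  below : ∀ i, b < i → lam.rowLen i = nu.rowLen i
  mid : ∀ i, t ≤ i → i < b → lam.rowLen (i + 1) = nu.rowLen i + 1
  jump : lam.rowLen t + b = nu.rowLen b + t + n
  pos : nu.rowLen b < lam.rowLen b

/-- The row differences of a ribbon telescope. -/
theorem telescope {f g : ℕ → ℕ} {t b : ℕ} (htb : t ≤ b)
    (hmid : ∀ i, t ≤ i → i < b → f (i + 1) = g i + 1)
    (hle : ∀ i, t ≤ i → i ≤ b → g i ≤ f i) :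
    (∑ i ∈ Finset.Ico t (b + 1), (f i - g i)) + g b + t = f t + b := by
  induction b, htb using Nat.le_induction with
  | base =>
    have := hle t le_rfl le_rfl
    simp; omega
  | succ b hb ih =>
    have := ih (fun i h1 h2 => hmid i h1 (by omega)) (fun i h1 h2 => hle i h1 (by omega))
    rw [Finset.sum_Ico_succ_top (by omega)]
    have h1 := hmid b hb (by omega)
    have h2 := hle (b + 1) (by omega) le_rfl
    omega

theorem card_sdiff_telescope {lam nu : YoungDiagram} {t b : ℕ} (htb : t ≤ b)
    (habove : ∀ i, i < t → lam.rowLen i ≤ nu.rowLen i)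
    (hbelow : ∀ i, b < i → lam.rowLen i ≤ nu.rowLen i)
    (hmid : ∀ i, t ≤ i → i < b → lam.rowLen (i + 1) = nu.rowLen i + 1)
    (hle : ∀ i, t ≤ i → i ≤ b → nu.rowLen i ≤ lam.rowLen i) :
    (lam.cells \ nu.cells).card + nu.rowLen b + t = lam.rowLen t + b := by
  rw [card_sdiff_eq_sum (N := lam.card + b + 1) (rowLen_eq_zero_of_card_le _ (by omega)),
    ← telescope htb hmid hle]
  congr 2
  symm
  refine Finset.sum_subset ?_ ?_
  · intro i
    simp only [Finset.mem_Ico, Finset.mem_range]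
    omega
  · intro i _ hi
    simp only [Finset.mem_Ico, not_and_or, not_le, not_lt] at hi
    rcases hi with hi | hi
    · have := habove i hi; omega
    · have := hbelow i (by omega); omega

theorem StepData.lt {n : ℕ} {lam nu : YoungDiagram} {t b : ℕ} (h : StepData n lam nu t b)
    {i : ℕ} (h1 : t ≤ i) (h2 : i ≤ b) : nu.rowLen i < lam.rowLen i := by
  rcases h2.lt_or_eq with h2 | rfl
  · have := h.mid i h1 h2
    have := rowLen_succ_le lam i
    omega
  · exact h.pos

theorem StepData.sub {n : ℕ} {lam nu : YoungDiagram} {t b : ℕ} (h : StepData n lam nu t b) :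
    nu ≤ lam := by
  refine le_iff_rowLen.2 fun i => ?_
  by_cases h1 : i < t
  · exact (h.above i h1).ge
  by_cases h2 : b < i
  · exact (h.below i h2).ge
  exact (h.lt (by omega) (by omega)).le

theorem StepData.row_mem {n : ℕ} {lam nu : YoungDiagram} {t b : ℕ} (h : StepData n lam nu t b)
    {i j : ℕ} (hij : (i, j) ∈ lam.cells \ nu.cells) : t ≤ i ∧ i ≤ b := by
  rw [mem_sdiff_iff] at hij
  constructor
  · by_contra hc
    have := h.above i (by omega)
    omega
  · by_contra hc
    have := h.below i (by omega)
    omega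

theorem StepData.image_fst {n : ℕ} {lam nu : YoungDiagram} {t b : ℕ}
    (h : StepData n lam nu t b) :
    (lam.cells \ nu.cells).image Prod.fst = Finset.Icc t b := by
  ext i
  rw [Finset.mem_image, Finset.mem_Icc]
  constructor
  · rintro ⟨⟨i', j⟩, hij, rfl⟩
    exact h.row_mem hij
  · rintro ⟨h1, h2⟩
    exact ⟨(i, nu.rowLen i), mem_sdiff_iff.2 ⟨le_rfl, h.lt h1 h2⟩, rfl⟩

theorem StepData.ribbonSpin_eq {n : ℕ} {lam nu : YoungDiagram} {t b : ℕ}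
    (h : StepData n lam nu t b) : ribbonSpin (lam.cells \ nu.cells) + t = b := by
  have := h.le
  rw [ribbonSpin, h.image_fst, Nat.card_Icc]
  omega

/-- Conversely, the row lengths described by `StepData` give an `n`-ribbon. -/
theorem StepData.ribbonStep {n : ℕ} {lam nu : YoungDiagram} {t b : ℕ}
    (h : StepData n lam nu t b) : RibbonStep n lam nu := by
  refine ⟨h.sub, ?_, ?_, ?_, lam, nu, h.sub, rfl⟩
  · have h1 := card_sdiff_telescope h.le (fun i hi => (h.above i hi).le)
      (fun i hi => (h.below i hi).le) h.mid (fun i h1 h2 => (h.lt h1 h2).le)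
    have := h.jump
    omega
  · -- every cell reaches the leftmost cell of the bottom row `b`
    have hrow : ∀ i d, (i, nu.rowLen i + d) ∈ lam.cells \ nu.cells →
        Reach (lam.cells \ nu.cells) (i, nu.rowLen i + d) (i, nu.rowLen i) := by
      intro i d
      induction d with
      | zero => exact fun _ => Relation.ReflTransGen.refl
      | succ d ih =>
        intro hd
        have hd' : (i, nu.rowLen i + d) ∈ lam.cells \ nu.cells := by
          rw [mem_sdiff_iff] at hd ⊢
          omega
        refine Relation.ReflTransGen.head ⟨hd', ?_⟩ (ih hd')
        unfold Adj
        simp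
        omega
    have hcol : ∀ d i, t ≤ i → i + d = b →
        Reach (lam.cells \ nu.cells) (i, nu.rowLen i) (b, nu.rowLen b) := by
      intro d
      induction d with
      | zero =>
        intro i _ hi
        obtain rfl : i = b := by omega
        exact Relation.ReflTransGen.refl
      | succ d ih =>
        intro i h1 h2
        have hm := h.mid i h1 (by omega)
        have h3 := rowLen_succ_le nu i
        obtain ⟨e, he⟩ := Nat.exists_eq_add_of_le h3
        have hmem : (i + 1, nu.rowLen i) ∈ lam.cells \ nu.cells := by
          rw [mem_sdiff_iff]
          omega
        refine Relation.ReflTransGen.head ⟨hmem, ?_⟩ ?_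
        · unfold Adj
          simp
        · refine Relation.ReflTransGen.trans ?_ (ih (i + 1) (by omega) (by omega))
          rw [he] at hmem ⊢
          exact hrow (i + 1) e hmem
    have hall : ∀ c ∈ lam.cells \ nu.cells,
        Reach (lam.cells \ nu.cells) c (b, nu.rowLen b) := by
      rintro ⟨i, j⟩ hc
      obtain ⟨h1, h2⟩ := h.row_mem hc
      obtain ⟨e, rfl⟩ := Nat.exists_eq_add_of_le (mem_sdiff_iff.1 hc).1
      exact (hrow i e hc).trans (hcol (b - i) i h1 (by omega))
    intro x hx y hy
    exact (hall x hx).trans ((hall y hy).symm' hy)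
  · rintro ⟨i, j, h1, h2, h3, h4⟩
    have r1 := (h.row_mem h1).1
    have r2 := (h.row_mem h4).2
    have := h.mid i r1 (by omega)
    have := (mem_sdiff_iff.1 h1).1
    have := (mem_sdiff_iff.1 h4).2
    omega

/-- Removing an `n`-ribbon always has the form described by `StepData`. -/
theorem RibbonStep.exists_stepData {n : ℕ} (hn : 1 ≤ n) {lam nu : YoungDiagram}
    (h : RibbonStep n lam nu) : ∃ t b, StepData n lam nu t b := by
  obtain ⟨hle, hcard, hconn, hsq, -⟩ := h
  set S := lam.cells \ nu.cells with hS
  have hne : S.Nonempty := by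
    rw [← Finset.card_pos]; omega
  obtain ⟨⟨t, jt⟩, htS, htmin⟩ := Finset.exists_min_image S Prod.fst hne
  obtain ⟨⟨b, jb⟩, hbS, hbmax⟩ := Finset.exists_max_image S Prod.fst hne
  simp only at htmin hbmax
  have hle' := le_iff_rowLen.1 hle
  have htb : t ≤ b := htmin _ hbS
  have hab : ∀ i, i < t → lam.rowLen i = nu.rowLen i := by
    intro i hi
    by_contra hc
    have := hle' i
    have := htmin (i, nu.rowLen i) (mem_sdiff_iff.2 ⟨le_rfl, by omega⟩)
    simp only at this
    omega
  have hbe : ∀ i, b < i → lam.rowLen i = nu.rowLen i := by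
    intro i hi
    by_contra hc
    have := hle' i
    have := hbmax (i, nu.rowLen i) (mem_sdiff_iff.2 ⟨le_rfl, by omega⟩)
    simp only at this
    omega
  have hmid : ∀ i, t ≤ i → i < b → lam.rowLen (i + 1) = nu.rowLen i + 1 := by
    intro i h1 h2
    obtain ⟨⟨xi, xj⟩, hx, ⟨yi, yj⟩, hy, hadj, hPx, hPy⟩ :=
      (hconn _ htS _ hbS).exists_crossing (fun c => c.1 ≤ i) htS h1 (by simp; omega)
    unfold Adj at hadj
    simp only at hadj hPx hPy
    obtain rfl : xi = i := by omega
    obtain rfl : yi = xi + 1 := by omega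
    obtain rfl : yj = xj := by omega
    have h3 := mem_sdiff_iff.1 hx
    have h4 := mem_sdiff_iff.1 hy
    refine le_antisymm ?_ (by omega)
    by_contra hc
    have h5 := rowLen_succ_le lam xi
    have h6 := rowLen_succ_le nu xi
    refine hsq ⟨xi, nu.rowLen xi, mem_sdiff_iff.2 ?_, mem_sdiff_iff.2 ?_, mem_sdiff_iff.2 ?_,
      mem_sdiff_iff.2 ?_⟩ <;> omega
  refine ⟨t, b, htb, hab, hbe, hmid, ?_, ?_⟩
  · have := card_sdiff_telescope htb (fun i hi => (hab i hi).le)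
      (fun i hi => (hbe i hi).le) hmid (fun i _ _ => hle' i)
    rw [← hS] at this
    omega
  · have := mem_sdiff_iff.1 hbS
    omega

end

noncomputable section

/-! ### Every ribbon tiling of a partition has a removable ribbon -/

theorem mem_cells_iff {lam : YoungDiagram} {i j : ℕ} : (i, j) ∈ lam.cells ↔ j < lam.rowLen i := by
  rw [YoungDiagram.mem_cells, YoungDiagram.mem_iff_lt_rowLen]

theorem IsRibbon.exists_stepData {n : ℕ} (hn : 1 ≤ n) {R : Finset Cell} (h : IsRibbon n R) :
    ∃ a c t b, StepData n a c t b ∧ R = a.cells \ c.cells := by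
  obtain ⟨h1, h2, h3, a, c, hca, rfl⟩ := h
  obtain ⟨t, b, hs⟩ := RibbonStep.exists_stepData hn (lam := a) (nu := c)
    ⟨hca, h1, h2, h3, a, c, hca, rfl⟩
  exact ⟨a, c, t, b, hs, rfl⟩

/-- A ribbon of a tiling of `lam` is removable as soon as its bottom-left cell lies on the lower
boundary of `lam` and has the largest content among such bottom-left cells. -/
theorem IsTilingOf.exists_removable {n : ℕ} (hn : 1 ≤ n) {lam : YoungDiagram}
    {T : Finset (Finset Cell)} (hT : IsTilingOf n lam.cells T) (hlam : lam ≠ ⊥) :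
    ∃ nu t b, StepData n lam nu t b ∧ lam.cells \ nu.cells ∈ T ∧
      IsTilingOf n nu.cells (T.erase (lam.cells \ nu.cells)) := by
  obtain ⟨hrib, hdisj, hcov⟩ := hT
  have hsub : ∀ R ∈ T, R ⊆ lam.cells := fun R hR => hcov ▸ Finset.subset_biUnion_of_mem id hR
  have hex : ∀ c ∈ lam.cells, ∃ R ∈ T, c ∈ R := by
    intro c hc
    rw [← hcov, Finset.mem_biUnion] at hc
    exact hc
  -- bottom-left cells of ribbons of `T` lying on the lower boundary of `lam`
  set C := lam.cells.filter (fun x => (x.1 + 1, x.2) ∉ lam.cells ∧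
    ∃ a c t, StepData n a c t x.1 ∧ a.cells \ c.cells ∈ T ∧ c.rowLen x.1 = x.2) with hC
  have tail_mem : ∀ a c t b, StepData n a c t b → a.cells \ c.cells ∈ T →
      lam.rowLen (b + 1) ≤ c.rowLen b → (b, c.rowLen b) ∈ C := by
    intro a c t b hs hR hb
    rw [hC, Finset.mem_filter]
    refine ⟨hsub _ hR (mem_sdiff_iff.2 ⟨le_rfl, hs.pos⟩), ?_, a, c, t, hs, hR, rfl⟩
    rw [mem_cells_iff]
    simpa using hb
  have hCne : C.Nonempty := by
    have h0 : ∃ l, lam.rowLen l = 0 := ⟨lam.card, rowLen_eq_zero_of_card_le _ le_rfl⟩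
    have hl := Nat.find_spec h0
    have hmin := fun i => Nat.find_min h0 (m := i)
    set l := Nat.find h0
    have hl0 : l ≠ 0 := by
      intro h
      apply hlam
      apply eq_of_rowLen
      intro i
      have := lam.rowLen_anti _ _ (Nat.zero_le i)
      rw [rowLen_bot]
      rw [h] at hl
      omega
    have hm := hmin (l - 1) (by omega)
    obtain ⟨R, hR, hcR⟩ := hex (l - 1, 0) (mem_cells_iff.2 (by omega))
    obtain ⟨a, c, t, b, hs, rfl⟩ := (hrib R hR).exists_stepData hn
    have hb := (hs.row_mem hcR).2
    have hbl := hsub _ hR (mem_sdiff_iff.2 ⟨le_rfl, hs.pos⟩ : (b, c.rowLen b) ∈ _)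
    rw [mem_cells_iff] at hbl
    have : b < l := by
      by_contra hc
      have := lam.rowLen_anti _ _ (not_lt.1 hc)
      omega
    obtain rfl : b = l - 1 := by omega
    refine ⟨_, tail_mem a c t _ hs hR ?_⟩
    rw [show l - 1 + 1 = l by omega, hl]
    exact Nat.zero_le _
  obtain ⟨⟨b, jb⟩, hbC, hmax⟩ :=
    Finset.exists_max_image C (fun x => (x.2 : ℤ) - x.1) hCne
  obtain ⟨-, hbelow, a, c, t, hs, hR, hjb⟩ := Finset.mem_filter.1 hbC
  simp only at hbelow hs hR hjb hmax
  subst hjb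
  rw [mem_cells_iff, not_lt] at hbelow
  -- rightmost cells of the rows of the ribbon lie on the boundary of `lam`
  have hrow_of : ∀ i, t ≤ i → i ≤ b → lam.rowLen (i + 1) ≤ c.rowLen i + 1 →
      lam.rowLen i = a.rowLen i := by
    intro i h1 h2 h3
    have hlt := hs.lt h1 h2
    refine le_antisymm ?_ ?_
    · by_contra hcon
      obtain ⟨R', hR', hy⟩ := hex (i, a.rowLen i) (mem_cells_iff.2 (by omega))
      obtain ⟨a', c', t', b', hs', rfl⟩ := (hrib R' hR').exists_stepData hn
      have hne : a.cells \ c.cells ≠ a'.cells \ c'.cells := by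
        intro h
        rw [← h, mem_sdiff_iff] at hy
        omega
      have hx : (i, a.rowLen i - 1) ∈ a.cells \ c.cells := mem_sdiff_iff.2 (by omega)
      have hx' := Finset.disjoint_left.1 (hdisj hR hR' hne) hx
      have hy' := mem_sdiff_iff.1 hy
      rw [mem_sdiff_iff] at hx'
      have hc' : c'.rowLen i = a.rowLen i := by omega
      have hr := hs'.row_mem hy
      have hb' : i = b' := by
        by_contra hib
        have hm := hs'.mid i hr.1 (by omega)
        have hz : (i + 1, c'.rowLen i) ∈ a'.cells \ c'.cells :=
          mem_sdiff_iff.2 ⟨rowLen_succ_le _ _, by omega⟩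
        have := mem_cells_iff.1 (hsub _ hR' hz)
        omega
      subst hb'
      have h4 := hmax _ (tail_mem a' c' t' i hs' hR' (by omega))
      simp only at h4
      have := c.rowLen_anti _ _ h2
      omega
    · have hx : (i, a.rowLen i - 1) ∈ a.cells \ c.cells := mem_sdiff_iff.2 (by omega)
      have := mem_cells_iff.1 (hsub _ hR hx)
      omega
  have hrow : ∀ d i, t ≤ i → i + d = b → lam.rowLen i = a.rowLen i := by
    intro d
    induction d with
    | zero =>
      intro i h1 h2
      obtain rfl : i = b := by omega
      exact hrow_of _ h1 le_rfl (by omega)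
    | succ d ih =>
      intro i h1 h2
      refine hrow_of _ h1 (by omega) ?_
      rw [ih (i + 1) (by omega) (by omega), hs.mid i h1 (by omega)]
  have hrow' : ∀ i, t ≤ i → i ≤ b → lam.rowLen i = a.rowLen i :=
    fun i h1 h2 => hrow (b - i) i h1 (by omega)
  obtain ⟨nu, hnu⟩ := exists_rowLen
    (fun i => if t ≤ i ∧ i ≤ b then c.rowLen i else lam.rowLen i) (by
      intro i
      have h1 := rowLen_succ_le lam i
      have h2 := rowLen_succ_le c i
      split_ifs with h3 h4 h4
      · exact h2
      · have := hs.lt h3.1 h3.2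
        have := hrow' _ h3.1 h3.2
        omega
      · obtain rfl : i = b := by omega
        exact hbelow
      · exact h1) (lam.card + b + 1) (by
      rw [if_neg (by omega)]
      exact rowLen_eq_zero_of_card_le _ (by omega))
  have hin : ∀ i, t ≤ i → i ≤ b → nu.rowLen i = c.rowLen i :=
    fun i h1 h2 => by rw [hnu, if_pos ⟨h1, h2⟩]
  have hout : ∀ i, ¬ (t ≤ i ∧ i ≤ b) → nu.rowLen i = lam.rowLen i :=
    fun i h => by rw [hnu, if_neg h]
  have hle := hs.le
  have hdata : StepData n lam nu t b := by
    refine ⟨hle, fun i hi => (hout i (by omega)).symm, fun i hi => (hout i (by omega)).symm,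
      fun i h1 h2 => ?_, ?_, ?_⟩
    · rw [hrow' _ (by omega) (by omega), hin i h1 (by omega), hs.mid i h1 h2]
    · rw [hrow' t le_rfl hle, hin b hle le_rfl, hs.jump]
    · rw [hrow' b hle le_rfl, hin b hle le_rfl]
      exact hs.pos
  have hcells : lam.cells \ nu.cells = a.cells \ c.cells := by
    ext ⟨i, j⟩
    by_cases hi : t ≤ i ∧ i ≤ b
    · rw [mem_sdiff_iff, mem_sdiff_iff, hin i hi.1 hi.2, hrow' i hi.1 hi.2]
    · exact ⟨fun h => absurd (hdata.row_mem h) hi, fun h => absurd (hs.row_mem h) hi⟩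
  refine ⟨nu, t, b, hdata, hcells ▸ hR, ?_⟩
  rw [hcells]
  refine ⟨fun R h => hrib R (Finset.mem_of_mem_erase h), fun A hA B hB hAB =>
    hdisj (Finset.mem_of_mem_erase hA) (Finset.mem_of_mem_erase hB) hAB, ?_⟩
  have hnl : nu.cells = lam.cells \ (a.cells \ c.cells) := by
    rw [← hcells, Finset.sdiff_sdiff_eq_self (YoungDiagram.cells_subset_iff.2 hdata.sub)]
  rw [hnl]
  ext x
  simp only [Finset.mem_biUnion, Finset.mem_erase, id, Finset.mem_sdiff (s := lam.cells)]
  constructor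
  · rintro ⟨R', ⟨hne, hR'⟩, hx⟩
    exact ⟨hsub _ hR' hx, Finset.disjoint_left.1 (hdisj hR' hR hne) hx⟩
  · rintro ⟨hx, hxR⟩
    obtain ⟨R', hR', hxR'⟩ := hex x hx
    exact ⟨R', ⟨fun h => hxR (h ▸ hxR'), hR'⟩, hxR'⟩

/-- Adding a ribbon to a tiled partition gives a tiled partition. -/
theorem IsTilingOf.insert_step {n : ℕ} {lam nu : YoungDiagram} {T : Finset (Finset Cell)}
    (hn : 1 ≤ n) (hT : IsTilingOf n nu.cells T) (hs : RibbonStep n lam nu) :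
    lam.cells \ nu.cells ∉ T ∧ IsTilingOf n lam.cells (insert (lam.cells \ nu.cells) T) := by
  obtain ⟨hrib, hdisj, hcov⟩ := hT
  have hsub : ∀ R ∈ T, R ⊆ nu.cells := fun R hR => hcov ▸ Finset.subset_biUnion_of_mem id hR
  have hd : ∀ R ∈ T, Disjoint (lam.cells \ nu.cells) R := fun R hR =>
    Finset.disjoint_of_subset_right (hsub R hR) Finset.sdiff_disjoint
  refine ⟨fun h => ?_, fun R hR => ?_, ?_, ?_⟩
  · have h1 := hd _ h
    rw [disjoint_self] at h1
    have h2 := hs.2.1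
    rw [h1] at h2
    simp at h2
    omega
  · rcases Finset.mem_insert.1 hR with rfl | hR
    · exact hs.2
    · exact hrib R hR
  · intro A hA B hB hAB
    rcases Finset.mem_insert.1 hA with rfl | hA' <;> rcases Finset.mem_insert.1 hB with rfl | hB'
    · exact absurd rfl hAB
    · exact hd _ hB'
    · exact (hd _ hA').symm
    · exact hdisj hA' hB' hAB
  · rw [Finset.biUnion_insert, hcov, id]
    exact Finset.sdiff_union_of_subset (YoungDiagram.cells_subset_iff.2 hs.1)

theorem isTilingOf_bot {n : ℕ} (hn : 1 ≤ n) {T : Finset (Finset Cell)} :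
    IsTilingOf n (⊥ : YoungDiagram).cells T ↔ T = ∅ := by
  constructor
  · rintro ⟨hrib, -, hcov⟩
    by_contra hne
    obtain ⟨R, hR⟩ := Finset.nonempty_iff_ne_empty.2 hne
    have h1 : R ⊆ (⊥ : YoungDiagram).cells := hcov ▸ Finset.subset_biUnion_of_mem id hR
    have h2 := Finset.card_le_card h1
    have h3 := (hrib R hR).1
    simp at h2
    subst h2
    simp at h3
    omega
  · rintro rfl
    exact ⟨by simp, by simp, by simp⟩

end

noncomputable section

/-! ### Beads -/

/-- The `i`-th beta number of a partition with at most `n` rows, `i < n`. -/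
def beta (n : ℕ) (lam : YoungDiagram) (i : ℕ) : ℕ := lam.rowLen i + (n - 1 - i)

/-- The set of the `n` beta numbers (first-column hook lengths) of a partition with at most `n`
rows. -/
def beads (n : ℕ) (lam : YoungDiagram) : Finset ℕ := (Finset.range n).image (beta n lam)

/-- A partition with at most `n` rows whose beta numbers represent every residue class modulo `n`
exactly once; these are the partitions with at most `n` rows and empty `n`-core. -/
def BalancedBeads (n : ℕ) (lam : YoungDiagram) : Prop :=
  lam.rowLen n = 0 ∧ (beads n lam).image (· % n) = Finset.range n

/-- The contribution of a pair of beads `y < x` to the maximal spin. -/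
def pairStat (n x y : ℕ) : ℕ :=
  if y < x then 2 * (y / n) + (if x % n < y % n then 1 else 0) else 0

/-- The statistic on bead sets which computes the maximal spin. -/
def beadStat (n : ℕ) (B : Finset ℕ) : ℕ := ∑ x ∈ B, ∑ y ∈ B, pairStat n x y

theorem beta_lt {n : ℕ} (lam : YoungDiagram) {i j : ℕ} (hij : i < j) (hj : j < n) :
    beta n lam j < beta n lam i := by
  have := lam.rowLen_anti i j hij.le
  unfold beta
  omega

theorem beta_injOn (n : ℕ) (lam : YoungDiagram) :
    Set.InjOn (beta n lam) (Finset.range n : Set ℕ) := by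
  intro i hi j hj h
  simp only [Finset.coe_range, Set.mem_Iio] at hi hj
  rcases lt_trichotomy i j with h1 | h1 | h1
  · have := beta_lt lam h1 hj; omega
  · exact h1
  · have := beta_lt lam h1 hi; omega

theorem beta_lt_iff {n : ℕ} (lam : YoungDiagram) {i j : ℕ} (hi : i < n) (hj : j < n) :
    beta n lam j < beta n lam i ↔ i < j := by
  rcases lt_trichotomy i j with h1 | h1 | h1
  · have := beta_lt lam h1 hj; omega
  · subst h1; omega
  · have := beta_lt lam h1 hi; omega

theorem beads_card (n : ℕ) (lam : YoungDiagram) : (beads n lam).card = n := by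
  rw [beads, Finset.card_image_of_injOn (beta_injOn n lam), Finset.card_range]

theorem beta_mem_beads {n : ℕ} (lam : YoungDiagram) {i : ℕ} (hi : i < n) :
    beta n lam i ∈ beads n lam := Finset.mem_image_of_mem _ (Finset.mem_range.2 hi)

/-- Exactly `i` beads are larger than the `i`-th one. -/
theorem card_filter_beta_lt {n : ℕ} (lam : YoungDiagram) {i : ℕ} (hi : i < n) :
    ((beads n lam).filter (beta n lam i < ·)).card = i := by
  have : (beads n lam).filter (beta n lam i < ·) = (Finset.range i).image (beta n lam) := by
    ext x
    simp only [beads, Finset.mem_filter, Finset.mem_image, Finset.mem_range]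
    constructor
    · rintro ⟨⟨j, hj, rfl⟩, h⟩
      exact ⟨j, (beta_lt_iff lam hj hi).1 h, rfl⟩
    · rintro ⟨j, hj, rfl⟩
      exact ⟨⟨j, by omega, rfl⟩, beta_lt lam hj hi⟩
  rw [this, Finset.card_image_of_injOn, Finset.card_range]
  exact (beta_injOn n lam).mono (by simpa using hi.le)

theorem BalancedBeads.injOn {n : ℕ} {lam : YoungDiagram} (h : BalancedBeads n lam) :
    Set.InjOn (· % n) (beads n lam : Set ℕ) := by
  rw [← Finset.card_image_iff, h.2, Finset.card_range, beads_card]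

theorem BalancedBeads.beta_mod_inj {n : ℕ} {lam : YoungDiagram} (h : BalancedBeads n lam) {i j : ℕ}
    (hi : i < n) (hj : j < n) (hij : beta n lam i % n = beta n lam j % n) : i = j :=
  beta_injOn n lam (by simpa using hi) (by simpa using hj)
    (h.injOn (beta_mem_beads lam hi) (beta_mem_beads lam hj) hij)

theorem beads_bot (n : ℕ) : beads n ⊥ = Finset.range n := by
  ext x
  simp only [beads, beta, rowLen_bot, Finset.mem_image, Finset.mem_range]
  constructor
  · rintro ⟨i, hi, rfl⟩
    omega
  · intro hx
    exact ⟨n - 1 - x, by omega, by omega⟩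

theorem balanced_bot (n : ℕ) : BalancedBeads n ⊥ := by
  refine ⟨rowLen_bot _, ?_⟩
  rw [beads_bot]
  ext x
  simp only [Finset.mem_image, Finset.mem_range]
  constructor
  · rintro ⟨i, hi, rfl⟩
    exact Nat.mod_lt _ (by omega)
  · intro hx
    exact ⟨x, hx, Nat.mod_eq_of_lt hx⟩

theorem beadStat_bot (n : ℕ) : beadStat n (beads n ⊥) = 0 := by
  rw [beads_bot]
  refine Finset.sum_eq_zero fun x hx => Finset.sum_eq_zero fun y hy => ?_
  rw [Finset.mem_range] at hx hy
  rw [pairStat, Nat.div_eq_of_lt hy, Nat.mod_eq_of_lt hx, Nat.mod_eq_of_lt hy]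
  split_ifs <;> omega

theorem StepData.beta_top {n : ℕ} {lam nu : YoungDiagram} {t b : ℕ} (h : StepData n lam nu t b)
    (hb : b < n) : beta n lam t = beta n nu b + n := by
  have := h.jump
  have := h.le
  unfold beta
  omega

/-- Adding an `n`-ribbon moves one bead `n` places up. -/
theorem StepData.beads_eq {n : ℕ} {lam nu : YoungDiagram} {t b : ℕ} (h : StepData n lam nu t b)
    (hb : b < n) :
    beads n lam = insert (beta n nu b + n) ((beads n nu).erase (beta n nu b)) := by
  have hle := h.le
  have htop := h.beta_top hb
  have hmid : ∀ i, t ≤ i → i < b → beta n lam (i + 1) = beta n nu i := by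
    intro i h1 h2
    have := h.mid i h1 h2
    unfold beta
    omega
  have hout : ∀ i, i < t ∨ b < i → beta n lam i = beta n nu i := by
    intro i hi
    unfold beta
    rcases hi with hi | hi
    · rw [h.above i hi]
    · rw [h.below i hi]
  ext x
  simp only [beads, Finset.mem_insert, Finset.mem_erase, Finset.mem_image, Finset.mem_range]
  constructor
  · rintro ⟨i, hi, rfl⟩
    by_cases h1 : i < t ∨ b < i
    · right
      rw [hout i h1]
      refine ⟨fun he => ?_, i, hi, rfl⟩
      have := beta_injOn n nu (by simpa using hi) (by simpa using hb) he
      omega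
    · by_cases h2 : i = t
      · left; rw [h2, htop]
      · right
        obtain ⟨j, rfl⟩ : ∃ j, i = j + 1 := ⟨i - 1, by omega⟩
        rw [hmid j (by omega) (by omega)]
        exact ⟨(beta_lt nu (by omega) hb).ne', j, by omega, rfl⟩
  · rintro (rfl | ⟨hne, i, hi, rfl⟩)
    · exact ⟨t, by omega, htop⟩
    · by_cases h1 : i < t ∨ b < i
      · exact ⟨i, hi, hout i h1⟩
      · have : i ≠ b := fun he => hne (by rw [he])
        exact ⟨i + 1, by omega, hmid i (by omega) (by omega)⟩

theorem StepData.lt_of_rowLen {n : ℕ} {lam nu : YoungDiagram} {t b : ℕ}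
    (h : StepData n lam nu t b) (hlam : lam.rowLen n = 0) : b < n := by
  by_contra hc
  have := lam.rowLen_anti _ _ (not_lt.1 hc)
  have := h.pos
  omega

theorem StepData.balanced_iff {n : ℕ} {lam nu : YoungDiagram} {t b : ℕ}
    (h : StepData n lam nu t b) (hb : b < n) : BalancedBeads n lam ↔ BalancedBeads n nu := by
  unfold BalancedBeads
  rw [h.below n hb, h.beads_eq hb, Finset.image_insert, Nat.add_mod_right]
  have : (beads n nu).image (· % n) = insert (beta n nu b % n)
      (((beads n nu).erase (beta n nu b)).image (· % n)) := by
    rw [← Finset.image_insert (f := (· % n)), Finset.insert_erase (beta_mem_beads nu hb)]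
  rw [this]

theorem beadStat_insert (n : ℕ) {x : ℕ} {C : Finset ℕ} (hx : x ∉ C) :
    beadStat n (insert x C) = beadStat n C + ∑ y ∈ C, (pairStat n x y + pairStat n y x) := by
  unfold beadStat
  rw [Finset.sum_insert hx, Finset.sum_insert hx]
  simp_rw [Finset.sum_insert hx]
  rw [Finset.sum_add_distrib, Finset.sum_add_distrib]
  have : pairStat n x x = 0 := by simp [pairStat]
  omega

/-- The effect on a pair of beads of moving one of them `n` places up. -/
theorem pairStat_move {n x y : ℕ} (hn : 1 ≤ n) (hxy : y % n ≠ x % n) :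
    pairStat n (x + n) y + pairStat n y (x + n) =
      pairStat n x y + pairStat n y x + ((if x < y then 1 else 0) + if x + n < y then 1 else 0) := by
  have hx := Nat.div_add_mod x n
  have hy := Nat.div_add_mod y n
  have hxl := Nat.mod_lt x hn
  have hyl := Nat.mod_lt y hn
  have h1 : (x + n) / n = x / n + 1 := Nat.add_div_right x hn
  have h2 : (x + n) % n = x % n := Nat.add_mod_right x n
  unfold pairStat
  rw [h1, h2]
  generalize x / n = p at *
  generalize y / n = r at *
  generalize x % n = a at *
  generalize y % n = c at *
  subst hx hy
  rcases lt_trichotomy p r with h | h | h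
  · rcases lt_or_eq_of_le (Nat.succ_le_of_lt h) with h' | h'
    · have : n * (p + 2) ≤ n * r := Nat.mul_le_mul_left n h'
      rw [Nat.mul_add] at this
      split_ifs <;> omega
    · have : n * r = n * p + n := by rw [← h', Nat.mul_succ]
      split_ifs <;> omega
  · subst h
    split_ifs <;> omega
  · have : n * (r + 1) ≤ n * p := Nat.mul_le_mul_left n h
    rw [Nat.mul_add] at this
    split_ifs <;> omega

theorem StepData.beadStat_eq {n : ℕ} (hn : 1 ≤ n) {lam nu : YoungDiagram} {t b : ℕ}
    (h : StepData n lam nu t b) (hb : b < n) (hnu : BalancedBeads n nu) :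
    beadStat n (beads n lam) = beadStat n (beads n nu) + (b + t) := by
  have hB := h.beads_eq hb
  set x := beta n nu b with hx
  set C := (beads n nu).erase x with hC
  have hnuC : beads n nu = insert x C := (Finset.insert_erase (beta_mem_beads nu hb)).symm
  have hxC : x ∉ C := Finset.notMem_erase _ _
  have hmod : ∀ y ∈ C, y % n ≠ x % n := by
    intro y hy hm
    exact Finset.ne_of_mem_erase hy
      (hnu.injOn (Finset.mem_of_mem_erase hy) (beta_mem_beads nu hb) hm)
  have hxnC : x + n ∉ C := fun hm => hmod _ hm (Nat.add_mod_right x n)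
  have e1 : (C.filter (x < ·)).card = b := by
    rw [← card_filter_beta_lt nu hb, ← hx, hnuC, Finset.filter_insert, if_neg (lt_irrefl _)]
  have e2 : (C.filter (x + n < ·)).card = t := by
    rw [← card_filter_beta_lt lam (show t < n from lt_of_le_of_lt h.le hb), h.beta_top hb, ← hx,
      hB, Finset.filter_insert, if_neg (lt_irrefl _)]
  rw [hB, hnuC, beadStat_insert n hxnC, beadStat_insert n hxC,
    Finset.sum_congr rfl fun y hy => pairStat_move hn (hmod y hy), Finset.sum_add_distrib,
    Finset.sum_add_distrib (f := fun y => if x < y then 1 else 0), ← Finset.card_filter,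
    ← Finset.card_filter, e1, e2]
  omega

end

noncomputable section

/-! ### Adding and removing ribbons for partitions with at most `n` rows -/

/-- From a partition with at most `n` rows and empty `n`-core, an `n`-ribbon with bottom row `b`
can be added for each `b < n`. -/
theorem BalancedBeads.exists_add {n : ℕ} {nu : YoungDiagram} (h : BalancedBeads n nu) {b : ℕ}
    (hb : b < n) : ∃ lam t, StepData n lam nu t b := by
  have hex : ∃ t, nu.rowLen t + b < nu.rowLen b + t + n := ⟨b, by omega⟩
  have ht := Nat.find_spec hex
  have hmin : ∀ i, i < Nat.find hex → ¬ (nu.rowLen i + b < nu.rowLen b + i + n) :=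
    fun i => Nat.find_min hex
  have htb : Nat.find hex ≤ b := Nat.find_min' hex (by omega)
  generalize Nat.find hex = t at *
  -- equality would give two beads in the same residue class
  have hstrict : ∀ i, i < t → nu.rowLen b + i + n < nu.rowLen i + b := by
    intro i hi
    have h1 := hmin i hi
    refine lt_of_le_of_ne (by omega) fun he => ?_
    have h2 : beta n nu i = beta n nu b + n := by
      unfold beta
      omega
    have h3 : beta n nu i % n = beta n nu b % n := by rw [h2, Nat.add_mod_right]
    have := h.beta_mod_inj (by omega) hb h3
    omega
  obtain ⟨lam, hlam⟩ := exists_rowLen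
    (fun i => if i < t then nu.rowLen i else if i = t then nu.rowLen b + t + n - b else
      if i ≤ b then nu.rowLen (i - 1) + 1 else nu.rowLen i) (by
      intro i
      have h1 := rowLen_succ_le nu i
      have h2 := rowLen_succ_le nu (i - 1)
      have h3 := nu.rowLen_anti (i - 1) (i + 1) (by omega)
      have h4 := hstrict i
      simp only [Nat.add_sub_cancel]
      by_cases c1 : i + 1 < t
      · rw [if_pos c1, if_pos (by omega)]
        exact h1
      rw [if_neg c1]
      by_cases c2 : i + 1 = t
      · rw [if_pos c2, if_pos (by omega)]
        have := h4 (by omega)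
        omega
      rw [if_neg c2, if_neg (show ¬ i < t by omega)]
      by_cases c3 : i = t
      · subst c3
        rw [if_pos rfl]
        split_ifs with c4
        · omega
        · obtain rfl : i = b := by omega
          omega
      rw [if_neg c3]
      have h5 := nu.rowLen_anti (i - 1) i (by omega)
      split_ifs <;> omega) (nu.card + b + 1) (by
      rw [if_neg (by omega), if_neg (by omega), if_neg (by omega)]
      exact rowLen_eq_zero_of_card_le _ (by omega))
  have hmid : ∀ i, t ≤ i → i < b → lam.rowLen (i + 1) = nu.rowLen i + 1 := by
    intro i h1 h2
    rw [hlam, if_neg (by omega), if_neg (by omega), if_pos (by omega), Nat.add_sub_cancel]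
  have htop : lam.rowLen t = nu.rowLen b + t + n - b := by
    rw [hlam, if_neg (by omega), if_pos rfl]
  refine ⟨lam, t, htb, ?_, ?_, hmid, ?_, ?_⟩
  · intro i hi
    rw [hlam, if_pos hi]
  · intro i hi
    rw [hlam, if_neg (by omega), if_neg (by omega), if_neg (by omega)]
  · omega
  · rcases htb.lt_or_eq with h1 | h1
    · have h2 := hmid (b - 1) (by omega) (by omega)
      have h3 := rowLen_succ_le nu (b - 1)
      rw [show b - 1 + 1 = b by omega] at h2 h3
      omega
    · subst h1
      omega

/-- A ribbon added to `nu` is determined by its bottom row. -/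
theorem StepData.unique {n : ℕ} {lam lam' nu : YoungDiagram} {t t' b : ℕ}
    (h : StepData n lam nu t b) (h' : StepData n lam' nu t' b) : lam = lam' := by
  have key : ∀ {lam lam' : YoungDiagram} {t t' : ℕ}, StepData n lam nu t b →
      StepData n lam' nu t' b → ¬ t < t' := by
    intro lam lam' t t' h h' hlt
    have h1 := h.mid t le_rfl (lt_of_lt_of_le hlt h'.le)
    have h2 := rowLen_succ_le lam t
    have h3 := h.jump
    have h4 := h'.jump
    have h5 := h'.above t hlt
    have h6 := lam'.rowLen_anti _ _ hlt.le
    omega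
  obtain rfl : t = t' := by
    have := key h h'
    have := key h' h
    omega
  refine eq_of_rowLen fun i => ?_
  by_cases h1 : i < t
  · rw [h.above i h1, h'.above i h1]
  by_cases h2 : b < i
  · rw [h.below i h2, h'.below i h2]
  by_cases h3 : i = t
  · subst h3
    have := h.jump
    have := h'.jump
    omega
  · obtain ⟨j, rfl⟩ : ∃ j, i = j + 1 := ⟨i - 1, by omega⟩
    rw [h.mid j (by omega) (by omega), h'.mid j (by omega) (by omega)]

/-- The rows of the added ribbon are determined by the two partitions. -/
theorem StepData.bottom_unique {n : ℕ} {lam nu : YoungDiagram} {t b t' b' : ℕ}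
    (h : StepData n lam nu t b) (h' : StepData n lam nu t' b') : b = b' := by
  have he := h.image_fst.symm.trans h'.image_fst
  have h1 := h.le
  have h2 := h'.le
  have e1 : b ∈ Finset.Icc t' b' := he ▸ Finset.mem_Icc.2 ⟨h1, le_rfl⟩
  have e2 : b' ∈ Finset.Icc t b := he.symm ▸ Finset.mem_Icc.2 ⟨h2, le_rfl⟩
  rw [Finset.mem_Icc] at e1 e2
  omega

/-- From a nonempty partition with at most `n` rows and empty `n`-core, an `n`-ribbon starting in
the top row can be removed: the largest bead is moved `n` places down. -/
theorem BalancedBeads.exists_remove {n : ℕ} {lam : YoungDiagram}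
    (h : BalancedBeads n lam) (hlam : lam ≠ ⊥) : ∃ nu b, StepData n lam nu 0 b := by
  have h0 : 0 < lam.rowLen 0 := by
    by_contra hc
    apply hlam
    apply eq_of_rowLen
    intro i
    have := lam.rowLen_anti 0 i (Nat.zero_le i)
    rw [rowLen_bot]
    omega
  have hn : 1 ≤ n := by
    by_contra hc
    obtain rfl : n = 0 := by omega
    have := h.1
    omega
  have hex : ∃ b, lam.rowLen (b + 1) + n < lam.rowLen 0 + b + 1 :=
    ⟨n - 1, by rw [show n - 1 + 1 = n by omega, h.1]; omega⟩
  have hb := Nat.find_spec hex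
  have hmin : ∀ i, i < Nat.find hex → ¬ (lam.rowLen (i + 1) + n < lam.rowLen 0 + i + 1) :=
    fun i => Nat.find_min hex
  have hbn : Nat.find hex ≤ n - 1 :=
    Nat.find_min' hex (by rw [show n - 1 + 1 = n by omega, h.1]; omega)
  generalize Nat.find hex = b at *
  have hno : ∀ j, 0 < j → j < n → beta n lam 0 ≠ beta n lam j + n := by
    intro j hj hjn he
    have h3 : beta n lam 0 % n = beta n lam j % n := by rw [he, Nat.add_mod_right]
    have := h.beta_mod_inj (by omega) hjn h3
    omega
  have hstrict : ∀ i, i < b → lam.rowLen 0 + i + 1 < lam.rowLen (i + 1) + n := by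
    intro i hi
    have h1 := hmin i hi
    refine lt_of_le_of_ne (by omega) fun he => hno (i + 1) (by omega) (by omega) ?_
    unfold beta
    omega
  have hpos : ∀ i, i < b → 0 < lam.rowLen (i + 1) := by
    intro i hi
    by_contra hc
    have h1 := hstrict i hi
    -- the position `n` below the largest bead would be the bead of an empty row
    have h2 := lam.rowLen_anti (i + 1) (n - lam.rowLen 0) (by omega)
    refine hno (n - lam.rowLen 0) (by omega) (by omega) ?_
    unfold beta
    omega
  obtain ⟨nu, hnu⟩ := exists_rowLen
    (fun i => if i < b then lam.rowLen (i + 1) - 1 else if i = b then lam.rowLen 0 + b - n else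
      lam.rowLen i) (by
      intro i
      have h1 := rowLen_succ_le lam i
      have h2 := rowLen_succ_le lam (i + 1)
      have h3 := hstrict i
      have h4 := hpos i
      by_cases c1 : i + 1 < b
      · rw [if_pos c1, if_pos (by omega)]
        omega
      by_cases c2 : i + 1 = b
      · rw [if_neg c1, if_pos c2, if_pos (by omega)]
        have := h3 (by omega)
        omega
      rw [if_neg c1, if_neg c2, if_neg (show ¬ i < b by omega)]
      split_ifs with c3
      · subst c3
        omega
      · exact h1) (lam.card + b + 1) (by
      rw [if_neg (by omega), if_neg (by omega)]
      exact rowLen_eq_zero_of_card_le _ (by omega))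
  have hnb : nu.rowLen b = lam.rowLen 0 + b - n := by
    rw [hnu, if_neg (by omega), if_pos rfl]
  refine ⟨nu, b, Nat.zero_le b, fun i hi => by omega, ?_, ?_, ?_, ?_⟩
  · intro i hi
    rw [hnu, if_neg (by omega), if_neg (by omega)]
  · intro i _ hi
    have := hpos i hi
    rw [hnu, if_pos hi]
    omega
  · omega
  · rcases Nat.eq_zero_or_pos b with h1 | h1
    · subst h1
      omega
    · have := hstrict (b - 1) (by omega)
      rw [show b - 1 + 1 = b by omega] at this
      omega

/-! ### The maximal spin -/

/-- Upper bound for the spin of a tiling, by removing one removable ribbon at a time. -/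
theorem tilingSpin_le {n : ℕ} (hn : 1 ≤ n) (m : ℕ) : ∀ (lam : YoungDiagram), lam.card ≤ m →
    BalancedBeads n lam → ∀ T, IsTilingOf n lam.cells T →
      tilingSpin T ≤ beadStat n (beads n lam) := by
  induction m with
  | zero =>
    intro lam hm _ T hT
    have hl : lam = ⊥ := by
      apply eq_of_rowLen
      intro i
      rw [rowLen_bot, rowLen_eq_zero_of_card_le _ (by omega)]
    subst hl
    rw [(isTilingOf_bot hn).1 hT]
    simp [tilingSpin]
  | succ m ih =>
    intro lam hm hbal T hT
    by_cases hl : lam = ⊥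
    · subst hl
      rw [(isTilingOf_bot hn).1 hT]
      simp [tilingSpin]
    obtain ⟨nu, t, b, hs, hR, hT'⟩ := hT.exists_removable hn hl
    have hb := hs.lt_of_rowLen hbal.1
    have hnu := (hs.balanced_iff hb).1 hbal
    have h1 := hs.ribbonStep.card_eq
    have h2 := ih nu (by omega) hnu _ hT'
    have h3 := hs.beadStat_eq hn hb hnu
    have h4 := hs.ribbonSpin_eq
    have h5 : tilingSpin T = tilingSpin (T.erase (lam.cells \ nu.cells)) +
        ribbonSpin (lam.cells \ nu.cells) := (Finset.sum_erase_add T ribbonSpin hR).symm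
    omega

/-- The upper bound is attained by always removing the ribbon that starts in the top row. -/
theorem exists_tilingSpin_eq {n : ℕ} (hn : 1 ≤ n) (m : ℕ) : ∀ (lam : YoungDiagram), lam.card ≤ m →
    BalancedBeads n lam → ∃ T, IsTilingOf n lam.cells T ∧
      tilingSpin T = beadStat n (beads n lam) := by
  induction m with
  | zero =>
    intro lam hm _
    have hl : lam = ⊥ := by
      apply eq_of_rowLen
      intro i
      rw [rowLen_bot, rowLen_eq_zero_of_card_le _ (by omega)]
    subst hl
    exact ⟨∅, (isTilingOf_bot hn).2 rfl, by rw [beadStat_bot]; simp [tilingSpin]⟩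
  | succ m ih =>
    intro lam hm hbal
    by_cases hl : lam = ⊥
    · subst hl
      exact ⟨∅, (isTilingOf_bot hn).2 rfl, by rw [beadStat_bot]; simp [tilingSpin]⟩
    obtain ⟨nu, b, hs⟩ := hbal.exists_remove hl
    have hb := hs.lt_of_rowLen hbal.1
    have hnu := (hs.balanced_iff hb).1 hbal
    have h1 := hs.ribbonStep.card_eq
    obtain ⟨T, hT, hTs⟩ := ih nu (by omega) hnu
    obtain ⟨hnot, hT'⟩ := hT.insert_step hn hs.ribbonStep
    refine ⟨_, hT', ?_⟩
    have h3 := hs.beadStat_eq hn hb hnu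
    have h4 := hs.ribbonSpin_eq
    rw [tilingSpin, Finset.sum_insert hnot, ← tilingSpin, hTs]
    omega

/-- The maximal spin is read off from the beads: removing a ribbon that occupies rows `t, …, b`
lowers `beadStat` by `b + t`, which is at least the spin `b - t`, with equality for `t = 0`. -/
theorem BalancedBeads.maxSpin_eq {n : ℕ} (hn : 1 ≤ n) {lam : YoungDiagram}
    (h : BalancedBeads n lam) : maxSpin n lam.cells = beadStat n (beads n lam) := by
  have hub : ∀ m ∈ {m : ℕ | ∃ T, IsTilingOf n lam.cells T ∧ tilingSpin T = m},
      m ≤ beadStat n (beads n lam) := by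
    rintro m ⟨T, hT, rfl⟩
    exact tilingSpin_le hn _ lam le_rfl h T hT
  have hmem := exists_tilingSpin_eq hn _ lam le_rfl h
  exact le_antisymm (csSup_le ⟨_, hmem⟩ hub) (le_csSup ⟨_, hub⟩ hmem)

end

noncomputable section

/-! ### The left-hand side -/

/-- Adding a ribbon with rows `t, …, b` raises the maximal spin by `b + t` and the spin by
`b - t`, in total by `2 * b`; each `b < n` occurs exactly once. -/
theorem sum_add_ribbon {n : ℕ} (hn : 1 ≤ n) {nu : YoungDiagram} (hnu : BalancedBeads n nu) {m : ℕ}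
    (hm : nu.card + n ≤ m) :
    (∑ lam ∈ (smallDiagrams m).filter (BalancedBeads n),
      (Polynomial.X : Polynomial ℤ) ^ beadStat n (beads n lam) *
        (if RibbonStep n lam nu then
          Polynomial.X ^ ribbonSpin (lam.cells \ nu.cells) else 0)) =
      Polynomial.X ^ beadStat n (beads n nu) *
        ∑ j ∈ Finset.range n, Polynomial.X ^ (2 * j) := by
  have hex : ∀ b, ∃ lam, b < n → ∃ t, StepData n lam nu t b := by
    intro b
    by_cases hb : b < n
    · obtain ⟨lam, t, h⟩ := hnu.exists_add hb
      exact ⟨lam, fun _ => ⟨t, h⟩⟩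
    · exact ⟨⊥, fun h => absurd h hb⟩
  choose f hf using hex
  simp_rw [mul_ite, mul_zero]
  rw [← Finset.sum_filter, Finset.mul_sum]
  symm
  refine Finset.sum_bij (fun b _ => f b) ?_ ?_ ?_ ?_
  · intro b hb
    rw [Finset.mem_range] at hb
    obtain ⟨t, h⟩ := hf b hb
    have := h.ribbonStep.card_eq
    rw [Finset.mem_filter, Finset.mem_filter, mem_smallDiagrams]
    exact ⟨⟨by omega, (h.balanced_iff hb).2 hnu⟩, h.ribbonStep⟩
  · intro b hb b' hb' he
    rw [Finset.mem_range] at hb hb'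
    obtain ⟨t, h⟩ := hf b hb
    obtain ⟨t', h'⟩ := hf b' hb'
    rw [← show f b = f b' from he] at h'
    exact h.bottom_unique h'
  · intro lam hlam
    rw [Finset.mem_filter, Finset.mem_filter] at hlam
    obtain ⟨t, b, h⟩ := hlam.2.exists_stepData hn
    have hb := h.lt_of_rowLen hlam.1.2.1
    obtain ⟨t', h'⟩ := hf b hb
    exact ⟨b, Finset.mem_range.2 hb, h'.unique h⟩
  · intro b hb
    rw [Finset.mem_range] at hb
    obtain ⟨t, h⟩ := hf b hb
    have h1 := h.beadStat_eq hn hb hnu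
    have h2 := h.ribbonSpin_eq
    rw [← pow_add, ← pow_add]
    congr 1
    omega

/-- The left-hand side of the theorem, with `maxSpin` replaced by `beadStat`. -/
theorem sum_balanced_stdSum {n : ℕ} (hn : 1 ≤ n) (k : ℕ) {m : ℕ} (hm : n * k ≤ m) :
    (∑ lam ∈ (smallDiagrams m).filter (BalancedBeads n),
      (Polynomial.X : Polynomial ℤ) ^ beadStat n (beads n lam) *
        stdSum n (fun s => Polynomial.X ^ s) k lam) =
      (∑ j ∈ Finset.range n, Polynomial.X ^ (2 * j)) ^ k := by
  induction k with
  | zero =>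
    rw [pow_zero, Finset.sum_eq_single ⊥]
    · rw [beadStat_bot, stdSum, tabSum_zero, if_pos rfl, pow_zero, one_mul]
    · intro lam _ hne
      rw [stdSum, tabSum_zero, if_neg hne, mul_zero]
    · intro h
      refine absurd ?_ h
      rw [Finset.mem_filter, mem_smallDiagrams, card_bot]
      exact ⟨Nat.zero_le _, balanced_bot n⟩
  | succ k ih =>
    have hm' : n * k + n ≤ m := by rw [← Nat.mul_succ]; exact hm
    rw [pow_succ, ← ih (by omega), Finset.sum_mul]
    have h1 : ∀ lam ∈ (smallDiagrams m).filter (BalancedBeads n),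
        (Polynomial.X : Polynomial ℤ) ^ beadStat n (beads n lam) *
          stdSum n (fun s => Polynomial.X ^ s) (k + 1) lam =
        ∑ nu ∈ (smallDiagrams m).filter (BalancedBeads n),
          (Polynomial.X ^ beadStat n (beads n lam) *
            (if RibbonStep n lam nu then
              Polynomial.X ^ ribbonSpin (lam.cells \ nu.cells) else 0)) *
            stdSum n (fun s => Polynomial.X ^ s) k nu := by
      intro lam hlam
      rw [Finset.mem_filter, mem_smallDiagrams] at hlam
      rw [stdSum_succ n _ k lam hlam.1, Finset.mul_sum, Finset.sum_filter]
      refine Finset.sum_congr rfl fun nu _ => ?_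
      by_cases hbal : BalancedBeads n nu
      · rw [if_pos hbal, mul_assoc]
      · rw [if_neg hbal, if_neg, zero_mul, mul_zero]
        intro hs
        obtain ⟨t, b, h⟩ := hs.exists_stepData hn
        exact hbal ((h.balanced_iff (h.lt_of_rowLen hlam.2.1)).1 hlam.2)
    rw [Finset.sum_congr rfl h1, Finset.sum_comm]
    refine Finset.sum_congr rfl fun nu hnu => ?_
    rw [Finset.mem_filter] at hnu
    rw [← Finset.sum_mul]
    by_cases h0 : stdSum n (fun s => (Polynomial.X : Polynomial ℤ) ^ s) k nu = 0
    · rw [h0, mul_zero, mul_zero, zero_mul]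
    · rw [sum_add_ribbon hn hnu.2 (by rw [card_of_stdSum_ne_zero h0]; exact hm')]
      ring

theorem balanced_of_stdSum_ne_zero {A : Type*} [CommSemiring A] {n : ℕ} (hn : 1 ≤ n) {u : ℕ → A}
    {k : ℕ} {lam : YoungDiagram} (h : stdSum n u k lam ≠ 0) (hl : lam.rowLen n = 0) :
    BalancedBeads n lam := by
  induction k generalizing lam with
  | zero => rw [eq_bot_of_stdSum_ne_zero h]; exact balanced_bot n
  | succ k ih =>
    obtain ⟨nu, hs, hne⟩ := exists_step_of_stdSum_ne_zero h
    obtain ⟨t, b, hd⟩ := hs.exists_stepData hn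
    have hb := hd.lt_of_rowLen hl
    exact (hd.balanced_iff hb).2 (ih hne (by rw [← hd.below n hb, hl]))

/-- The chain of shapes of a standard tableau strips `lam` down to the empty partition. -/
theorem isNCoreOf_bot_of_stdSum_ne_zero {A : Type*} [CommSemiring A] {n : ℕ} (hn : 1 ≤ n)
    {u : ℕ → A} {k : ℕ} {lam : YoungDiagram} (h : stdSum n u k lam ≠ 0) : IsNCoreOf n ⊥ lam := by
  refine ⟨?_, fun mu hmu => ?_⟩
  · induction k generalizing lam with
    | zero => rw [eq_bot_of_stdSum_ne_zero h]
    | succ k ih =>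
      obtain ⟨nu, hs, hne⟩ := exists_step_of_stdSum_ne_zero h
      exact Relation.ReflTransGen.head hs (ih hne)
  · have := hmu.card_eq
    rw [card_bot] at this
    omega

theorem rows_lt_iff {n : ℕ} {lam : YoungDiagram} :
    (∀ c ∈ lam.cells, c.1 < n) ↔ lam.rowLen n = 0 := by
  constructor
  · intro h
    by_contra hc
    have := h (n, 0) (mem_cells_iff.2 (Nat.pos_of_ne_zero hc))
    simp at this
  · rintro h ⟨i, j⟩ hc
    by_contra hi
    rw [mem_cells_iff] at hc
    have := lam.rowLen_anti n i (not_lt.1 hi)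
    omega

theorem prod_stdWeight {A : Type*} [CommSemiring A] (x : A) {n k : ℕ} {lam : YoungDiagram}
    (T : RibbonTableau n k lam ⊥) :
    (∏ i : Fin k, stdWeight (fun s => x ^ s) i (T.tiling i)) =
      if T.IsStandard then x ^ T.spin else 0 := by
  split_ifs with h
  · rw [RibbonTableau.spin, ← Finset.prod_pow_eq_pow_sum]
    refine Finset.prod_congr rfl fun i _ => ?_
    rw [stdWeight, if_pos (h i)]
  · unfold RibbonTableau.IsStandard at h
    push Not at h
    obtain ⟨i, hi⟩ := h
    exact Finset.prod_eq_zero (Finset.mem_univ i) (by rw [stdWeight, if_neg hi])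

theorem lhs_inner (n k : ℕ) (lam : YoungDiagram) :
    (∑ᶠ T ∈ {T : RibbonTableau n k lam ⊥ | T.IsStandard},
        (Polynomial.X : Polynomial ℤ) ^ (maxSpin n lam.cells + T.spin)) =
      Polynomial.X ^ maxSpin n lam.cells * stdSum n (fun s => Polynomial.X ^ s) k lam := by
  rw [stdSum, tabSum, mul_finsum]
  refine finsum_congr fun T => ?_
  rw [prod_stdWeight, mul_ite, mul_zero, ← pow_add]
  rw [finsum_eq_if]
  rfl

theorem lhs_eq {n : ℕ} (hn : 1 ≤ n) (k : ℕ) :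
    (∑ᶠ lam ∈ {lam : YoungDiagram | IsNCoreOf n ⊥ lam ∧ ∀ c ∈ lam.cells, c.1 < n},
      ∑ᶠ T ∈ {T : RibbonTableau n k lam ⊥ | T.IsStandard},
        (Polynomial.X : Polynomial ℤ) ^ (maxSpin n lam.cells + T.spin)) =
      (∑ j ∈ Finset.range n, Polynomial.X ^ (2 * j)) ^ k := by
  rw [← sum_balanced_stdSum hn k (m := n * k) le_rfl, ← finsum_mem_coe_finset]
  simp_rw [lhs_inner]
  set S : YoungDiagram → Polynomial ℤ := stdSum n (fun s => Polynomial.X ^ s) k with hS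
  have key : ∀ lam, S lam ≠ 0 →
      ((IsNCoreOf n ⊥ lam ∧ ∀ c ∈ lam.cells, c.1 < n) ↔
        lam ∈ (smallDiagrams (n * k)).filter (BalancedBeads n)) := by
    intro lam h0
    rw [Finset.mem_filter, mem_smallDiagrams, rows_lt_iff]
    exact ⟨fun h => ⟨(card_of_stdSum_ne_zero h0).le, balanced_of_stdSum_ne_zero hn h0 h.2⟩,
      fun h => ⟨isNCoreOf_bot_of_stdSum_ne_zero hn h0, h.2.1⟩⟩
  refine finsum_congr fun lam => ?_
  by_cases h0 : S lam = 0
  · simp only [h0, mul_zero, finsum_zero]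
  rw [finsum_eq_if, finsum_eq_if]
  simp only [Set.mem_ofPred_eq, Finset.mem_coe]
  by_cases hmem : lam ∈ (smallDiagrams (n * k)).filter (BalancedBeads n)
  · rw [if_pos ((key lam h0).2 hmem), if_pos hmem,
      (Finset.mem_filter.1 hmem).2.maxSpin_eq hn]
  · rw [if_neg (fun h => hmem ((key lam h0).1 h)), if_neg hmem]

/-! ### The right-hand side -/

theorem tilingSpin_one {lam nu : YoungDiagram} {D : Finset (Finset Cell)}
    (h : IsHStripTiling 1 (lam.cells \ nu.cells) D) : tilingSpin D = 0 := by
  refine Finset.sum_eq_zero fun R hR => ?_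
  have h1 := (h.1.1 R hR).1
  have h2 : (R.image Prod.fst).card ≤ R.card := Finset.card_image_le
  unfold ribbonSpin
  omega

theorem aeval_schurPoly (n : ℕ) (mu : YoungDiagram) (v : ℕ → Polynomial ℤ) :
    MvPolynomial.aeval (fun j : Fin n => v j) (schurPoly n mu) = schurVal v n mu := by
  rw [schurPoly, ribbonFn, schurVal, tabSum, map_finsum _ (Set.toFinite _)]
  refine finsum_congr fun T => ?_
  have hspin : T.spin = 0 := Finset.sum_eq_zero fun i _ => tilingSpin_one (T.tiling_strip i)
  rw [tableauTerm, hspin, pow_zero, map_mul, map_one, map_one, one_mul, map_prod]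
  refine Finset.prod_congr rfl fun i _ => ?_
  rw [map_pow, MvPolynomial.aeval_X]

theorem natCard_standard (k : ℕ) (mu : YoungDiagram) :
    ((Nat.card {T : RibbonTableau 1 k mu ⊥ // T.IsStandard} : ℕ) : Polynomial ℤ) =
      stdSum 1 (fun _ => (1 : Polynomial ℤ)) k mu := by
  have := Fintype.ofFinite (RibbonTableau 1 k mu ⊥)
  rw [stdSum, tabSum, finsum_eq_sum_of_fintype, Nat.card_eq_fintype_card, Fintype.card_subtype,
    Finset.card_filter, Nat.cast_sum]
  refine Finset.sum_congr rfl fun T _ => ?_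
  have h := prod_stdWeight (1 : Polynomial ℤ) T
  simp only [one_pow] at h
  rw [h]
  split_ifs <;> simp

theorem rhs_eq (n k : ℕ) :
    (∑ᶠ mu ∈ {mu : YoungDiagram | mu.card = k},
      Nat.card {T : RibbonTableau 1 k mu ⊥ // T.IsStandard} •
        MvPolynomial.aeval
          (fun j : Fin n => (Polynomial.X : Polynomial ℤ) ^ (2 * (j : ℕ)))
          (schurPoly n mu)) =
      (∑ j ∈ Finset.range n, Polynomial.X ^ (2 * j)) ^ k := by
  rw [← sum_std_mul_schurVal (fun j => (Polynomial.X : Polynomial ℤ) ^ (2 * j)) n k le_rfl,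
    ← finsum_mem_coe_finset]
  refine finsum_congr fun mu => ?_
  rw [aeval_schurPoly n mu (fun j => Polynomial.X ^ (2 * j)), nsmul_eq_mul, natCard_standard]
  by_cases h0 : stdSum 1 (fun _ => (1 : Polynomial ℤ)) k mu = 0
  · simp only [h0, zero_mul, finsum_zero]
  have hc := card_of_stdSum_ne_zero h0
  rw [one_mul] at hc
  rw [finsum_eq_if, finsum_eq_if]
  simp only [Set.mem_ofPred_eq, Finset.mem_coe]
  rw [if_pos hc, if_pos (mem_smallDiagrams.2 hc.le)]

end

/-- `Σ_T q^{mspin(sh(T)) + s(T)} = Σ_{μ ⊢ k} s_μ(1,q²,…,q^{2(n-1)}) f^μ`,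
where `T` runs over standard `n`-ribbon tableaux with `k` ribbons whose shape has empty
`n`-core and at most `n` rows, and `f^μ` is the number of standard Young tableaux of
shape `μ`. -/
theorem mspin_spin_generating_function (n k : ℕ) (hn : 1 ≤ n) (hk : 1 ≤ k) :
    (∑ᶠ lam ∈ {lam : YoungDiagram | IsNCoreOf n ⊥ lam ∧ ∀ c ∈ lam.cells, c.1 < n},
      ∑ᶠ T ∈ {T : RibbonTableau n k lam ⊥ | T.IsStandard},
        (Polynomial.X : Polynomial ℤ) ^ (maxSpin n lam.cells + T.spin)) =
    ∑ᶠ mu ∈ {mu : YoungDiagram | mu.card = k},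
      Nat.card {T : RibbonTableau 1 k mu ⊥ // T.IsStandard} •
        MvPolynomial.aeval
          (fun j : Fin n => (Polynomial.X : Polynomial ℤ) ^ (2 * (j : ℕ)))
          (schurPoly n mu) := by
  rw [lhs_eq hn, rhs_eq]
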